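/- arXiv:1110.3490 — 2 statements merged into one kernel-verified Lean document; each statement's English description precedes it below -/
import Mathlib

section
/- Let n, r ∈ ℕ such that r divides n. Suppose G is a graph on n vertices such that for all non-adjacent distinct vertices x, y of G, d(x) + d(y) ≥ 2(1 − 1/r)n − 1. Then G contains a perfect K_r-packing. -/
/-- The degree of a vertex. -/
noncomputable def deg {V : Type*} (G : SimpleGraph V) (v : V) : ℕ := Nat.card (G.neighborSet v)

/-- A perfect `K_r`-packing: a collection of vertex-disjoint `r`-cliques covering all vertices. -/
def HasPerfectKrPacking {n : ℕ} (G : SimpleGraph (Fin n)) (r : ℕ) : Prop :=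
  ∃ P : Finset (Finset (Fin n)),
    (∀ p ∈ P, p.card = r ∧ G.IsClique (p : Set (Fin n))) ∧
    (P : Set (Finset (Fin n))).PairwiseDisjoint id ∧
    P.biUnion id = Finset.univ

/-!
Partition the complement of `G` into `n / r` independent sets of size `r`: in the complement the
degrees of adjacent vertices `x`, `y` satisfy `d(x) + d(y) < 2 * (n / r)`, and the Ore-type version
of the Hajnal–Szemerédi theorem due to Kierstead and Kostochka provides an equitable colouring.

One inducts on the number of vertices, and then on the number of edges. Putting a deleted edge back
and recolouring one of its ends yields a colouring that is equitable up to one class `a` which is a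
vertex short and one class `b` which has a vertex too many. A class is accessible if vertices can
be moved along a chain of classes from it to `a`; if `b` is accessible, shifting along the chain
makes the colouring equitable. Otherwise let `A` be the union of the accessible classes. Every
vertex outside `A` has a neighbour in each accessible class. A class is terminal if the other
accessible classes reach `a` without it. If `y ∉ A` has exactly one neighbour `z` in a terminal
class (a solo neighbour), then either `z` can move to another accessible class, which makes room
for `y`, or `y` and `z` can be exchanged; the part of the colouring outside `A` is redone by
induction. Choosing the colouring with the most accessible classes and, among those, the fewest
edges leaving `A`, the exchange bounds the degree of `z` into the complement of `A`. Give each edge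
from a vertex `x` in a suitable set of terminal classes to the complement of `A` the weight
`1 / d`, where `d` is the number of such edges at `x`. Every vertex outside `A` then receives so
much weight that the complement of `A` is too small for the class sizes, a contradiction.
-/

section Reachability

open Relation

variable {ι : Type*} {r : ι → ι → Prop} {a c d u w : ι}

/-- The relation `r` with both endpoints confined to `P`; its reflexive transitive closure is
reachability by paths that stay inside `P`. -/
def confine (r : ι → ι → Prop) (P : Set ι) (x y : ι) : Prop :=
  r x y ∧ x ∈ P ∧ y ∈ P

/-- The points that reach `a`, but only along paths through `u`: those dominated by `u` in the
sense of flow graphs (with `u` itself excluded). -/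
def dominated (r : ι → ι → Prop) (a u : ι) : Set ι :=
  {c | ReflTransGen r c a ∧ c ≠ u ∧ ¬ ReflTransGen (confine r {u}ᶜ) c a}

/-- A point that reaches `a` and whose deletion does not disconnect any other point from `a`. -/
def IsTerminal (r : ι → ι → Prop) (a w : ι) : Prop :=
  ReflTransGen r w a ∧ ∀ c, ReflTransGen r c a → c ≠ w → ReflTransGen (confine r {w}ᶜ) c a

lemma isTerminal_of_dominated_eq_empty (hw : ReflTransGen r w a) (h : dominated r a w = ∅) :
    IsTerminal r a w := by
  refine ⟨hw, fun c hc hcw => ?_⟩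
  by_contra hcon
  exact (Set.eq_empty_iff_forall_notMem.1 h) c ⟨hc, hcw, hcon⟩

lemma reflTransGen_confine_reachable {P : Set ι} (h : ReflTransGen (confine r P) c a) :
    ReflTransGen (confine r (P ∩ {x | ReflTransGen r x a})) c a := by
  induction h using ReflTransGen.head_induction_on with
  | refl => exact .refl
  | head hxy hya ih =>
    have hy := ReflTransGen.mono (fun _ _ h => h.1) _ _ hya
    exact .head ⟨hxy.1, ⟨hxy.2.1, hy.head hxy.1⟩, hxy.2.2, hy⟩ ih

/-- Leave `c` for the last time. -/
lemma exists_step_avoiding (h : ReflTransGen r c a) (hca : c ≠ a) :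
    ∃ d, r c d ∧ d ≠ c ∧ ReflTransGen (confine r {c}ᶜ) d a := by
  suffices key : ∀ x, ReflTransGen r x a → (x ≠ c ∧ ReflTransGen (confine r {c}ᶜ) x a) ∨
      ∃ d, r c d ∧ d ≠ c ∧ ReflTransGen (confine r {c}ᶜ) d a from
    (key c h).resolve_left fun hc => hc.1 rfl
  intro x hx
  induction hx using ReflTransGen.head_induction_on with
  | refl => exact .inl ⟨hca.symm, .refl⟩
  | @head x y hxy _ ih =>
    rcases ih with ⟨hyc, hya⟩ | hd
    · rcases eq_or_ne x c with rfl | hxc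
      · exact .inr ⟨y, hxy, hyc, hya⟩
      · exact .inl ⟨hxc, .head ⟨hxy, hxc, hyc⟩ hya⟩
    · exact .inr hd

lemma reflTransGen_avoiding_of_not (hd : ReflTransGen (confine r {u}ᶜ) d a)
    (hw : ¬ ReflTransGen (confine r {u}ᶜ) w a) :
    d ≠ w ∧ ReflTransGen (confine r {w}ᶜ) d a := by
  induction hd using ReflTransGen.head_induction_on with
  | refl => exact ⟨fun haw => hw (haw ▸ .refl), .refl⟩
  | @head x y hxy hya ih =>
    have hxw : x ≠ w := fun hxw => hw (hxw ▸ .head hxy hya)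
    exact ⟨hxw, .head ⟨hxy.1, hxw, ih.1⟩ ih.2⟩

lemma reflTransGen_avoiding_or (hu : ReflTransGen r u a) (huw : u ≠ w) :
    ReflTransGen (confine r {u}ᶜ) w a ∨ ReflTransGen (confine r {w}ᶜ) u a := by
  rcases eq_or_ne u a with rfl | hua
  · exact .inr .refl
  obtain ⟨d, hud, -, hda⟩ := exists_step_avoiding hu hua
  refine or_iff_not_imp_left.2 fun hw => ?_
  obtain ⟨hdw, hda'⟩ := reflTransGen_avoiding_of_not hda hw
  exact .head ⟨hud, huw, hdw⟩ hda'

lemma dominated_ssubset (hw : w ∈ dominated r a u) : dominated r a w ⊂ dominated r a u := by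
  refine (Set.ssubset_iff_of_subset ?_).2 ⟨w, hw, fun h => h.2.1 rfl⟩
  rintro x ⟨hx, hxw, hxw'⟩
  refine ⟨hx, ?_, fun h => hxw' (reflTransGen_avoiding_of_not h hw.2.2).2⟩
  rintro rfl
  exact (reflTransGen_avoiding_or hx hxw).elim hw.2.2 hxw'

lemma mem_dominated_root (hc : ReflTransGen r c a) (hca : c ≠ a) : c ∈ dominated r a a := by
  refine ⟨hc, hca, fun h => ?_⟩
  rcases ReflTransGen.cases_tail h with rfl | ⟨d, -, hda⟩
  · exact hca rfl
  · exact hda.2.2 rfl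

/-- The terminal points are those dominated by `u`, where `u` is chosen so that as few points as
possible, but at least one, are dominated by it. -/
lemma exists_isTerminal_closed [Finite ι] (r : ι → ι → Prop) (a : ι) :
    ∃ (T : Set ι) (u : ι), T.Nonempty ∧ (∀ w ∈ T, IsTerminal r a w) ∧
      ∀ w ∈ T, ∀ x, ReflTransGen r x a → r w x → x ∈ T ∨ x = u := by
  by_cases hroot : dominated r a a = ∅
  · have eq_root : ∀ x, ReflTransGen r x a → x = a := fun x hx => by
      by_contra hxa
      exact Set.notMem_empty x (hroot ▸ mem_dominated_root hx hxa)
    refine ⟨{a}, a, Set.singleton_nonempty a, ?_, fun _ _ x hx _ => .inr (eq_root x hx)⟩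
    rintro _ rfl
    exact isTerminal_of_dominated_eq_empty .refl hroot
  · obtain ⟨_, ⟨⟨u, rfl⟩, hne⟩, hmin⟩ :=
      (Set.toFinite {D | (∃ u, dominated r a u = D) ∧ D.Nonempty}).exists_minimal
        ⟨_, ⟨a, rfl⟩, Set.nonempty_iff_ne_empty.2 hroot⟩
    refine ⟨dominated r a u, u, hne, fun w hw => ?_, fun w hw x hx hwx => ?_⟩
    · refine isTerminal_of_dominated_eq_empty hw.1 (Set.not_nonempty_iff_eq_empty.1 fun hne' => ?_)
      have hlt := dominated_ssubset hw
      exact hlt.2 (hmin ⟨⟨w, rfl⟩, hne'⟩ hlt.1)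
    · refine or_iff_not_imp_right.2 fun hxu => ⟨hx, hxu, fun hxa => ?_⟩
      exact hw.2.2 (.head ⟨hwx, hw.2.1, hxu⟩ hxa)

end Reachability

section Coloring

open Finset Function

variable {V ι : Type*} {G : SimpleGraph V} {S T : Finset V} {C D : Finset ι} {s : ℕ}
  {f g : V → ι} {a b b' c : ι} {x y z : V}

open Classical in
/-- The vertices of `S` coloured `c` by `f`. -/
noncomputable def classIn (S : Finset V) (f : V → ι) (c : ι) : Finset V := {v ∈ S | f v = c}

/-- `f` restricts to a proper colouring of `G[S]` with colours from `C`. Partial colourings are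
total functions whose values off `S` are ignored. -/
structure IsColoringOn (G : SimpleGraph V) (S : Finset V) (C : Finset ι) (f : V → ι) : Prop where
  mem : ∀ v ∈ S, f v ∈ C
  ne_of_adj : ∀ x ∈ S, ∀ y ∈ S, G.Adj x y → f x ≠ f y

/-- A colouring of `G[S]` all of whose colour classes have exactly `s` vertices. -/
structure IsEquitableOn (G : SimpleGraph V) (S : Finset V) (C : Finset ι) (s : ℕ) (f : V → ι) : Prop
    extends IsColoringOn G S C f where
  card_class : ∀ c ∈ C, #(classIn S f c) = s

/-- A colouring of `G[S]` whose colour classes have `s` vertices, except that `a` is one vertex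
short and `b` has one vertex too many; it is equitable if `a = b`. Only the classes of colours in
`C` are constrained, so `a ∉ C` (or `b ∉ C`) means that no class is short (or too large). -/
structure IsNearlyEquitableOn [DecidableEq ι] (G : SimpleGraph V) (S : Finset V) (C : Finset ι)
    (s : ℕ) (a b : ι) (f : V → ι) : Prop extends IsColoringOn G S C f where
  card_class : ∀ c ∈ C,
    #(classIn S f c) + (if c = a then 1 else 0) = s + (if c = b then 1 else 0)

@[simp]
lemma mem_classIn {v : V} : v ∈ classIn S f c ↔ v ∈ S ∧ f v = c := by
  simp [classIn]

lemma classIn_subset : classIn S f c ⊆ S := fun _ hv => (mem_classIn.1 hv).1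

lemma card_classIn_insert [DecidableEq V] [DecidableEq ι] (hy : y ∉ S) (c e : ι) :
    #(classIn (insert y S) (update f y c) e) = #(classIn S f e) + if e = c then 1 else 0 := by
  have hclass : ∀ v ≠ y, v ∈ classIn (insert y S) (update f y c) e ↔ v ∈ classIn S f e :=
    fun v hv => by simp [hv]
  split_ifs with hec
  · rw [← card_insert_of_notMem (a := y) (by simp [hy])]
    congr 1
    ext v
    by_cases hv : v = y
    · simp [hv, hec]
    · rw [hclass v hv, mem_insert, or_iff_right hv]
  · congr 1
    ext v
    by_cases hv : v = y
    · simp [hv, hy, Ne.symm hec]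
    · exact hclass v hv

lemma card_classIn_erase [DecidableEq V] [DecidableEq ι] (hz : z ∈ S) (e : ι) :
    #(classIn (S.erase z) f e) + (if e = f z then 1 else 0) = #(classIn S f e) := by
  have h := card_classIn_insert (f := f) (notMem_erase z S) (f z) e
  rw [insert_erase hz, update_eq_self] at h
  exact h.symm

lemma card_classIn_update [DecidableEq V] [DecidableEq ι] (hz : z ∈ S) (c e : ι) :
    #(classIn S (update f z c) e) + (if e = f z then 1 else 0) =
      #(classIn S f e) + if e = c then 1 else 0 := by
  have h := card_classIn_insert (f := f) (notMem_erase z S) c e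
  rw [insert_erase hz] at h
  have := card_classIn_erase (f := f) hz e
  omega

lemma card_classIn_piecewise [DecidableEq V] (hST : Disjoint S T) (e : ι) :
    #(classIn (S ∪ T) (S.piecewise f g) e) = #(classIn S f e) + #(classIn T g e) := by
  have hdisj : Disjoint (classIn S f e) (classIn T g e) :=
    hST.mono classIn_subset classIn_subset
  rw [← card_union_of_disjoint hdisj]
  congr 1
  ext v
  by_cases hv : v ∈ S
  · simp [hv, disjoint_left.1 hST hv]
  · simp [hv]

namespace IsColoringOn

lemma mono (h : IsColoringOn G T C f) (hST : S ⊆ T) : IsColoringOn G S C f :=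
  ⟨fun v hv => h.mem v (hST hv), fun x hx y hy => h.ne_of_adj x (hST hx) y (hST hy)⟩

lemma insert [DecidableEq V] (h : IsColoringOn G S C f) (hc : c ∈ C)
    (hfree : ∀ u ∈ S, f u = c → ¬ G.Adj y u) :
    IsColoringOn G (insert y S) C (update f y c) := by
  have mem_of_ne : ∀ {v}, v ∈ Insert.insert y S → v ≠ y → v ∈ S :=
    fun hv hvy => (mem_insert.1 hv).resolve_left hvy
  refine ⟨fun v hv => ?_, fun u hu v hv huv => ?_⟩
  · rcases eq_or_ne v y with rfl | hvy
    · simpa using hc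
    · simpa [hvy] using h.mem v (mem_of_ne hv hvy)
  · rcases eq_or_ne u y with rfl | huy
    · have hvS := mem_of_ne hv huv.ne'
      simpa [huv.ne'] using fun hcv : c = f v => hfree v hvS hcv.symm huv
    · rcases eq_or_ne v y with rfl | hvy
      · simpa [huy] using fun huc => hfree u (mem_of_ne hu huy) huc huv.symm
      · simpa [huy, hvy] using h.ne_of_adj u (mem_of_ne hu huy) v (mem_of_ne hv hvy) huv

lemma piecewise [DecidableEq V] [DecidableEq ι] (hf : IsColoringOn G S C f)
    (hg : IsColoringOn G T D g) (hCD : Disjoint C D) :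
    IsColoringOn G (S ∪ T) (C ∪ D) (S.piecewise f g) := by
  have mem_right : ∀ v ∈ S ∪ T, v ∉ S → v ∈ T := fun v hv hvS => (mem_union.1 hv).resolve_left hvS
  refine ⟨fun v hv => ?_, fun u hu v hv huv => ?_⟩
  · by_cases hvS : v ∈ S
    · simp [hvS, hf.mem v hvS]
    · simp [hvS, hg.mem v (mem_right v hv hvS)]
  · by_cases huS : u ∈ S <;> by_cases hvS : v ∈ S <;>
      simp only [piecewise_eq_of_mem, piecewise_eq_of_notMem, huS, hvS, not_false_eq_true]
    · exact hf.ne_of_adj u huS v hvS huv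
    · exact disjoint_iff_ne.1 hCD _ (hf.mem u huS) _ (hg.mem v (mem_right v hv hvS))
    · exact (disjoint_iff_ne.1 hCD _ (hf.mem v hvS) _ (hg.mem u (mem_right u hu huS))).symm
    · exact hg.ne_of_adj u (mem_right u hu huS) v (mem_right v hv hvS) huv

lemma card_class_eq_zero (h : IsColoringOn G S C f) (hc : c ∉ C) : #(classIn S f c) = 0 := by
  rw [card_eq_zero, eq_empty_iff_forall_notMem]
  intro v hv
  rw [mem_classIn] at hv
  exact hc (hv.2 ▸ h.mem v hv.1)

end IsColoringOn

lemma isNearlyEquitableOn_self [DecidableEq ι] :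
    IsNearlyEquitableOn G S C s a a f ↔ IsEquitableOn G S C s f :=
  ⟨fun h => ⟨h.1, fun c hc => Nat.add_right_cancel (h.2 c hc)⟩,
    fun h => ⟨h.1, fun c hc => by rw [h.2 c hc]⟩⟩

namespace IsNearlyEquitableOn

variable [DecidableEq ι]

lemma congr_right (h : IsNearlyEquitableOn G S C s a b f) (hb : b ∉ C) (hb' : b' ∉ C) :
    IsNearlyEquitableOn G S C s a b' f := by
  refine ⟨h.1, fun c hc => ?_⟩
  rw [h.2 c hc, if_neg (ne_of_mem_of_not_mem hc hb), if_neg (ne_of_mem_of_not_mem hc hb')]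

lemma recolor [DecidableEq V] (h : IsNearlyEquitableOn G S C s a b f) (ha : a ∈ C) (hz : z ∈ S)
    (hfree : ∀ u ∈ S, f u = a → ¬ G.Adj z u) :
    IsNearlyEquitableOn G S C s (f z) b (update f z a) := by
  refine ⟨insert_eq_self.2 hz ▸ h.1.insert ha hfree, fun c hc => ?_⟩
  rw [card_classIn_update hz, h.2 c hc]

lemma insert_short [DecidableEq V] (h : IsNearlyEquitableOn G S C s a b f) (hb : b ∉ C)
    (ha : a ∈ C) (hy : y ∉ S) (hfree : ∀ u ∈ S, f u = a → ¬ G.Adj y u) :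
    IsEquitableOn G (insert y S) C s (update f y a) := by
  refine ⟨h.1.insert ha hfree, fun c hc => ?_⟩
  rw [card_classIn_insert hy, h.2 c hc, if_neg (ne_of_mem_of_not_mem hc hb), add_zero]

lemma insert_excess [DecidableEq V] (h : IsNearlyEquitableOn G S C s a b f) (hb : b ∉ C)
    (hc : c ∈ C) (hy : y ∉ S) (hfree : ∀ u ∈ S, f u = c → ¬ G.Adj y u) :
    IsNearlyEquitableOn G (insert y S) C s a c (update f y c) := by
  refine ⟨h.1.insert hc hfree, fun e he => ?_⟩
  rw [card_classIn_insert hy, add_right_comm, h.2 e he, if_neg (ne_of_mem_of_not_mem he hb),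
    add_zero]

lemma exchange [DecidableEq V] (h : IsNearlyEquitableOn G S C s a b f) (hz : z ∈ S) (hy : y ∉ S)
    (hfree : ∀ u ∈ S, f u = f z → G.Adj y u → u = z) :
    IsNearlyEquitableOn G (insert y (S.erase z)) C s a b (update f y (f z)) := by
  have hy' : y ∉ S.erase z := fun hy' => hy (mem_of_mem_erase hy')
  refine ⟨(h.1.mono (erase_subset z S)).insert (h.1.mem z hz) fun u hu huz hyu =>
    ne_of_mem_erase hu (hfree u (mem_of_mem_erase hu) huz hyu), fun c hc => ?_⟩
  rw [card_classIn_insert hy', card_classIn_erase hz, h.2 c hc]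

lemma piecewise [DecidableEq V] (hf : IsNearlyEquitableOn G S C s a b f)
    (hg : IsNearlyEquitableOn G T D s a b g) (hCD : Disjoint C D) (hST : Disjoint S T) :
    IsNearlyEquitableOn G (S ∪ T) (C ∪ D) s a b (S.piecewise f g) := by
  refine ⟨hf.1.piecewise hg.1 hCD, fun c hc => ?_⟩
  rw [card_classIn_piecewise hST]
  rcases mem_union.1 hc with hcC | hcD
  · rw [hg.1.card_class_eq_zero (disjoint_left.1 hCD hcC), add_zero, hf.2 c hcC]
  · rw [hf.1.card_class_eq_zero (disjoint_right.1 hCD hcD), zero_add, hg.2 c hcD]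

lemma restrict (h : IsNearlyEquitableOn G S D s a b f) (hCD : C ⊆ D) :
    IsNearlyEquitableOn G {v ∈ S | f v ∈ C} C s a b f := by
  refine ⟨⟨fun v hv => (mem_filter.1 hv).2, (h.1.mono (filter_subset _ _)).2⟩, fun c hc => ?_⟩
  rw [← h.2 c (hCD hc)]
  congr 2
  ext v
  simp only [mem_classIn, mem_filter, and_assoc, and_congr_right_iff, and_iff_right_iff_imp]
  exact fun _ hvc => hvc ▸ hc

lemma card_add (h : IsNearlyEquitableOn G S C s a b f) :
    #S + (if a ∈ C then 1 else 0) = #C * s + (if b ∈ C then 1 else 0) := by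
  have hS : #S = ∑ c ∈ C, #(classIn S f c) := by
    unfold classIn
    convert card_eq_sum_card_fiberwise (fun v hv => h.1.mem v hv)
  calc #S + (if a ∈ C then 1 else 0)
      = ∑ c ∈ C, (#(classIn S f c) + if c = a then 1 else 0) := by
        rw [sum_add_distrib, ← hS, sum_ite_eq']
    _ = ∑ c ∈ C, (s + if c = b then 1 else 0) := sum_congr rfl h.2
    _ = #C * s + (if b ∈ C then 1 else 0) := by
        rw [sum_add_distrib, sum_const, smul_eq_mul, sum_ite_eq']

end IsNearlyEquitableOn

lemma IsNearlyEquitableOn.of_deleteEdges [DecidableEq ι]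
    (h : IsNearlyEquitableOn (G.deleteEdges {s(x, y)}) S C s a b f) (hxy : f x ≠ f y) :
    IsNearlyEquitableOn G S C s a b f := by
  refine ⟨⟨h.mem, fun u hu v hv huv => ?_⟩, h.2⟩
  by_cases he : s(u, v) = s(x, y)
  · rcases Sym2.eq_iff.1 he with ⟨rfl, rfl⟩ | ⟨rfl, rfl⟩
    · exact hxy
    · exact hxy.symm
  · exact h.ne_of_adj u hu v hv (SimpleGraph.deleteEdges_adj.2 ⟨huv, he⟩)

end Coloring

section Degree

open Finset

variable {V ι : Type*} {G : SimpleGraph V} {S T : Finset V} {C N : Finset ι} {f : V → ι}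
  {x y : V} {n k : ℕ}

open Classical in
/-- The number of neighbours of `x` in `S`; the vertex `x` need not belong to `S`. -/
noncomputable def degIn (G : SimpleGraph V) (S : Finset V) (x : V) : ℕ := #{v ∈ S | G.Adj x v}

/-- The Ore-type degree condition on `G[S]`: degrees of adjacent vertices add up to less than
`2 * k`. -/
def OreOn (G : SimpleGraph V) (S : Finset V) (k : ℕ) : Prop :=
  ∀ x ∈ S, ∀ y ∈ S, G.Adj x y → degIn G S x + degIn G S y < 2 * k

lemma degIn_mono (h : S ⊆ T) (x : V) : degIn G S x ≤ degIn G T x := by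
  classical exact card_le_card (filter_subset_filter _ h)

lemma OreOn.mono (h : OreOn G T k) (hST : S ⊆ T) : OreOn G S k :=
  fun x hx y hy hxy => (Nat.add_le_add (degIn_mono hST x) (degIn_mono hST y)).trans_lt
    (h x (hST hx) y (hST hy) hxy)

lemma degIn_le_of_le {H : SimpleGraph V} (h : G ≤ H) (S : Finset V) (x : V) :
    degIn G S x ≤ degIn H S x := by
  unfold degIn
  gcongr with v
  exact @h _ _

lemma OreOn.anti {H : SimpleGraph V} (h : OreOn H S k) (hle : G ≤ H) : OreOn G S k :=
  fun x hx y hy hxy => (Nat.add_le_add (degIn_le_of_le hle S x) (degIn_le_of_le hle S y)).trans_lt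
    (h x hx y hy (hle hxy))

lemma degIn_add_degIn_compl [Fintype V] [DecidableEq V] (G : SimpleGraph V) (S : Finset V)
    (x : V) : degIn G S x + degIn G Sᶜ x = degIn G univ x := by
  classical
  rw [degIn, degIn, degIn, ← card_union_of_disjoint
    (disjoint_filter_filter disjoint_compl_right), ← filter_union, union_compl]

lemma degIn_pos : 0 < degIn G S x ↔ ∃ v ∈ S, G.Adj x v := by
  classical
  rw [degIn, card_pos]
  exact filter_nonempty_iff

lemma degIn_eq_zero : degIn G S x = 0 ↔ ∀ v ∈ S, ¬ G.Adj x v := by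
  rw [← not_iff_not, ← ne_eq, ← Nat.pos_iff_ne_zero, degIn_pos]
  push Not
  rfl

lemma degIn_le_one : degIn G S x ≤ 1 ↔ ∀ v ∈ S, ∀ w ∈ S, G.Adj x v → G.Adj x w → v = w := by
  classical
  rw [degIn, card_le_one]
  simp only [mem_filter, and_imp]
  exact ⟨fun h v hv w hw hxv hxw => h v hv hxv w hw hxw,
    fun h v hv hxv w hw hxw => h v hv w hw hxv hxw⟩

lemma degIn_insert [DecidableEq V] [DecidableRel G.Adj] (hy : y ∉ S) :
    degIn G (insert y S) x = degIn G S x + if G.Adj x y then 1 else 0 := by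
  rw [degIn, filter_insert]
  by_cases h : G.Adj x y
  · rw [if_pos h, if_pos h, card_insert_of_notMem (by simp [hy]), degIn]
  · rw [if_neg h, if_neg h, degIn, add_zero]

lemma degIn_erase_add [DecidableEq V] [DecidableRel G.Adj] (hy : y ∈ S) :
    degIn G (S.erase y) x + (if G.Adj x y then 1 else 0) = degIn G S x := by
  rw [← degIn_insert (notMem_erase y S), insert_erase hy]

lemma sum_degIn_classIn (hf : ∀ v ∈ S, f v ∈ C) (x : V) :
    ∑ c ∈ C, degIn G (classIn S f c) x = degIn G S x := by
  classical
  rw [degIn, card_eq_sum_card_fiberwise (f := f) (t := C) fun v hv => hf v (mem_filter.1 hv).1]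
  refine sum_congr rfl fun c _ => ?_
  rw [degIn, classIn, filter_comm]

lemma sum_degIn_classIn_le (C : Finset ι) (f : V → ι) (x : V) :
    ∑ c ∈ C, degIn G (classIn S f c) x ≤ degIn G S x := by
  classical
  calc ∑ c ∈ C, degIn G (classIn S f c) x
      = ∑ c ∈ C, degIn G (classIn {v ∈ S | f v ∈ C} f c) x := sum_congr rfl fun c hc => by
        congr 1
        ext v
        simp only [mem_classIn, mem_filter, and_assoc, and_congr_right_iff, iff_and_self]
        exact fun _ hvc => hvc ▸ hc
    _ = degIn G {v ∈ S | f v ∈ C} x := sum_degIn_classIn (fun v hv => (mem_filter.1 hv).2) x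
    _ ≤ degIn G S x := degIn_mono (filter_subset _ _) x

lemma exists_degIn_classIn_lt (h : degIn G S x < #C * n) (f : V → ι) :
    ∃ c ∈ C, degIn G (classIn S f c) x < n := by
  by_contra! hcon
  refine h.not_ge ((card_nsmul_le_sum C _ n hcon).trans (sum_degIn_classIn_le C f x))

lemma card_add_card_le_degIn (hNC : N ⊆ C)
    (hC : ∀ c ∈ C, 1 ≤ degIn G (classIn S f c) x) (hN : ∀ c ∈ N, 2 ≤ degIn G (classIn S f c) x) :
    #C + #N ≤ degIn G S x := by
  classical
  calc #C + #N = ∑ c ∈ C, (1 + if c ∈ N then 1 else 0) := by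
        rw [sum_add_distrib, sum_boole, filter_mem_eq_inter, inter_eq_right.2 hNC]
        simp
    _ ≤ ∑ c ∈ C, degIn G (classIn S f c) x := sum_le_sum fun c hc => by
        split_ifs with hcN
        exacts [hN c hcN, hC c hc]
    _ ≤ degIn G S x := sum_degIn_classIn_le C f x

lemma card_le_degIn (hC : ∀ c ∈ C, 1 ≤ degIn G (classIn S f c) x) : #C ≤ degIn G S x := by
  simpa using (card_nsmul_le_sum C _ 1 hC).trans (sum_degIn_classIn_le C f x)

end Degree

section Cut

open Finset

variable {V : Type*} {G : SimpleGraph V} {A : Finset V} {y z : V}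

/-- The number of edges of `G` between `A` and its complement. -/
noncomputable def cut [Fintype V] [DecidableEq V] (G : SimpleGraph V) (A : Finset V) : ℕ :=
  ∑ x ∈ A, degIn G Aᶜ x

lemma sum_degIn_insert [DecidableEq V] (S : Finset V) (hy : y ∉ A) :
    ∑ x ∈ S, degIn G (insert y A) x = ∑ x ∈ S, degIn G A x + degIn G S y := by
  classical
  simp only [degIn_insert hy, sum_add_distrib, sum_boole]
  rw [degIn]
  simp only [G.adj_comm y, Nat.cast_id]

lemma cut_insert [Fintype V] [DecidableEq V] (hy : y ∉ A) :
    cut G (insert y A) + degIn G A y = cut G A + degIn G Aᶜ y := by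
  classical
  have hy' : y ∉ (insert y A)ᶜ := by simp
  have hA : Aᶜ = insert y (insert y A)ᶜ := by
    rw [compl_insert, insert_erase (mem_compl.2 hy)]
  have hloop : degIn G Aᶜ y = degIn G (insert y A)ᶜ y := by
    rw [hA, degIn_insert hy', if_neg G.irrefl, add_zero]
  have hsum : cut G A = ∑ x ∈ A, degIn G (insert y A)ᶜ x + degIn G A y := by
    rw [cut, hA, sum_degIn_insert A hy']
  rw [hsum, cut, sum_insert hy, hloop]
  ring

lemma cut_exchange [Fintype V] [DecidableEq V] (hz : z ∈ A) (hy : y ∉ A) (hyz : G.Adj y z) :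
    cut G (insert y (A.erase z)) + degIn G Aᶜ z + degIn G A y =
      cut G A + degIn G A z + degIn G Aᶜ y + 2 := by
  classical
  have hyA : y ∉ A.erase z := fun h => hy (mem_of_mem_erase h)
  have hcompl : (A.erase z)ᶜ = insert z Aᶜ := compl_erase
  have hinsert := cut_insert (G := G) hyA
  have herase := cut_insert (G := G) (notMem_erase z A)
  have hAy := degIn_erase_add (G := G) (x := y) hz
  have hAz := degIn_erase_add (G := G) (x := z) hz
  have hAcy := degIn_insert (G := G) (S := Aᶜ) (x := y) (y := z) (by simpa using hz)
  have hAcz := degIn_insert (G := G) (S := Aᶜ) (x := z) (y := z) (by simpa using hz)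
  rw [hcompl] at hinsert herase
  rw [insert_erase hz] at herase
  simp only [hyz, G.irrefl, if_true, if_false] at hAy hAz hAcy hAcz
  omega

end Cut

section Absorb

open Finset

variable {V ι : Type*} [DecidableEq V] [DecidableEq ι] {G : SimpleGraph V} {S : Finset V}
  {C : Finset ι} {s : ℕ} {f : V → ι} {a : ι} {z : V}

namespace IsEquitableOn

lemma exists_absorb (h : IsEquitableOn G S C s f) (ha : a ∉ C) (hz : z ∉ S)
    (hdeg : degIn G S z < #C) :
    ∃ b ∈ C, ∃ f', IsNearlyEquitableOn G (insert z S) C s a b f' := by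
  obtain ⟨b, hb, hfree⟩ := exists_degIn_classIn_lt (n := 1) (by rwa [mul_one]) f
  rw [Nat.lt_one_iff, degIn_eq_zero] at hfree
  exact ⟨b, hb, _, (isNearlyEquitableOn_self.2 h).insert_excess ha hb hz
    fun u hu hub => hfree u (mem_classIn.2 ⟨hu, hub⟩)⟩

lemma exists_absorb_or_displace (h : IsEquitableOn G S C s f) (ha : a ∉ C) (hz : z ∉ S)
    (hdeg : degIn G S z < #C * 2) :
    (∃ b ∈ C, ∃ f', IsNearlyEquitableOn G (insert z S) C s a b f') ∨
      #C ≤ degIn G S z ∧ ∃ v ∈ S, G.Adj z v ∧ #C ≤ degIn G S v + 1 ∧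
        ∃ f', IsEquitableOn G (insert z (S.erase v)) C s f' := by
  classical
  rcases lt_or_ge (degIn G S z) #C with hlt | hge
  · exact .inl (h.exists_absorb ha hz hlt)
  obtain ⟨c, hc, hlt⟩ := exists_degIn_classIn_lt hdeg f
  have hunique := degIn_le_one.1 (Nat.lt_succ_iff.1 hlt)
  rcases Nat.eq_zero_or_pos (degIn G (classIn S f c) z) with hzero | hpos
  · rw [degIn_eq_zero] at hzero
    exact .inl ⟨c, hc, _, (isNearlyEquitableOn_self.2 h).insert_excess ha hc hz
      fun u hu huc => hzero u (mem_classIn.2 ⟨hu, huc⟩)⟩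
  obtain ⟨v, hv, hzv⟩ := degIn_pos.1 hpos
  obtain ⟨hvS, rfl⟩ := mem_classIn.1 hv
  have hexchange : IsEquitableOn G (insert z (S.erase v)) C s _ :=
    isNearlyEquitableOn_self.1 <| (isNearlyEquitableOn_self (a := a).2 h).exchange hvS hz
      fun u hu huv hzu => hunique u (mem_classIn.2 ⟨hu, huv⟩) v hv hzu hzv
  have hdegv : degIn G (insert z (S.erase v)) v = degIn G S v + 1 := by
    have := degIn_erase_add (G := G) (x := v) hvS
    rw [if_neg G.irrefl] at this
    rw [degIn_insert fun hz' => hz (mem_of_mem_erase hz'), if_pos hzv.symm]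
    omega
  have hvT : v ∉ insert z (S.erase v) := by simp [hzv.ne']
  rcases lt_or_ge (degIn G S v + 1) #C with hlt | hge'
  · obtain ⟨b, hb, f', hf'⟩ := hexchange.exists_absorb ha hvT (hdegv ▸ hlt)
    rw [insert_comm, insert_erase hvS] at hf'
    exact .inl ⟨b, hb, f', hf'⟩
  · exact .inr ⟨hge, v, hvS, hzv, hge', _, hexchange⟩

end IsEquitableOn

end Absorb

section Accessible

open Finset Function Relation

variable {V ι : Type*} {G : SimpleGraph V} {s : ℕ} {f g : V → ι} {a b b' c d : ι} {x y z : V}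

/-- Some vertex coloured `c` has no neighbour coloured `d`, so that it can be recoloured `d`. -/
def Movable (G : SimpleGraph V) (f : V → ι) (c d : ι) : Prop :=
  c ≠ d ∧ ∃ v, f v = c ∧ ∀ u, f u = d → ¬ G.Adj v u

/-- `z` is the only neighbour of `y` in its colour class. -/
def IsSoloNeighbor (G : SimpleGraph V) (f : V → ι) (y z : V) : Prop :=
  G.Adj y z ∧ ∀ u, f u = f z → G.Adj y u → u = z

open Classical in
/-- The colours from which a vertex can be shifted, class by class, into the class of `a`. -/
noncomputable def accessible [Fintype ι] (G : SimpleGraph V) (f : V → ι) (a : ι) : Finset ι :=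
  {c | ReflTransGen (Movable G f) c a}

/-- The union of the colour classes of the colours in `C`. -/
def colored [Fintype V] [DecidableEq ι] (f : V → ι) (C : Finset ι) : Finset V :=
  {v | f v ∈ C}

@[simp]
lemma mem_accessible [Fintype ι] : c ∈ accessible G f a ↔ ReflTransGen (Movable G f) c a := by
  simp [accessible]

lemma self_mem_accessible [Fintype ι] : a ∈ accessible G f a := mem_accessible.2 .refl

@[simp]
lemma mem_colored [Fintype V] [DecidableEq ι] {C : Finset ι} : x ∈ colored f C ↔ f x ∈ C := by
  simp [colored]

lemma IsTerminal.path_accessible_erase [Fintype ι] [DecidableEq ι]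
    (hd : IsTerminal (Movable G f) a d) (hc : c ∈ accessible G f a) (hcd : c ≠ d) :
    ReflTransGen (confine (Movable G f) ↑((accessible G f a).erase d)) c a := by
  have hset : ({d}ᶜ ∩ {x | ReflTransGen (Movable G f) x a} : Set ι) =
      ↑((accessible G f a).erase d) := by
    ext x
    simp [and_comm]
  exact hset ▸ reflTransGen_confine_reachable (hd.2 c (mem_accessible.1 hc) hcd)

lemma exists_adj_of_notMem_colored_accessible [Fintype V] [Fintype ι] [DecidableEq ι]
    (hy : y ∉ colored f (accessible G f a)) (hc : c ∈ accessible G f a) :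
    ∃ u, f u = c ∧ G.Adj y u := by
  rw [mem_colored] at hy
  by_contra! hfree
  exact hy (mem_accessible.2 (.head ⟨fun h => hy (h ▸ hc), y, rfl, hfree⟩ (mem_accessible.1 hc)))

lemma card_le_degIn_colored [Fintype V] [DecidableEq ι] {C D : Finset ι} (hDC : D ⊆ C)
    (h : ∀ c ∈ D, ∃ u, f u = c ∧ G.Adj x u) : #D ≤ degIn G (colored f C) x := by
  refine card_le_degIn (f := f) fun c hc => ?_
  obtain ⟨u, rfl, hxu⟩ := h c hc
  exact degIn_pos.2 ⟨u, by simpa using hDC hc, hxu⟩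

lemma card_accessible_le_degIn [Fintype V] [Fintype ι] [DecidableEq ι]
    (hy : y ∉ colored f (accessible G f a)) :
    #(accessible G f a) ≤ degIn G (colored f (accessible G f a)) y :=
  card_le_degIn_colored subset_rfl fun _ => exists_adj_of_notMem_colored_accessible hy

lemma card_accessible_add_card_le_degIn [Fintype V] [Fintype ι] [DecidableEq ι] {N : Finset ι}
    (hy : y ∉ colored f (accessible G f a)) (hN : N ⊆ accessible G f a)
    (hN' : ∀ c ∈ N, 2 ≤ degIn G (classIn (colored f (accessible G f a)) f c) y) :
    #(accessible G f a) + #N ≤ degIn G (colored f (accessible G f a)) y := by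
  refine card_add_card_le_degIn hN (fun c hc => ?_) hN'
  obtain ⟨u, rfl, hyu⟩ := exists_adj_of_notMem_colored_accessible hy hc
  exact degIn_pos.2 ⟨u, by simpa using hc, hyu⟩

namespace IsNearlyEquitableOn

variable [Fintype V] [Fintype ι] [DecidableEq ι]

/-- Induction along a path from `c` to `a`: make room in the second class of the path, then move
a vertex of `c` there. -/
lemma exists_shift (h : IsNearlyEquitableOn G univ univ s a b f) (P : Finset ι)
    (hc : ReflTransGen (confine (Movable G f) P) c a) :
    ∃ f', IsNearlyEquitableOn G univ univ s c b f' ∧ (∀ e ∉ P, ∀ v, f' v = e ↔ f v = e) ∧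
      ∀ v, f' v = c → f v = c := by
  classical
  induction P using Finset.strongInduction generalizing c with
  | H P ih =>
    rcases eq_or_ne c a with rfl | hca
    · exact ⟨f, h, fun _ _ _ => Iff.rfl, fun _ => id⟩
    obtain ⟨d, ⟨⟨hcd, v, rfl, hv⟩, hcP, hdP⟩, -, hda⟩ := exists_step_avoiding hc hca
    have hda' : ReflTransGen (confine (Movable G f) ↑(P.erase (f v))) d a := by
      refine ReflTransGen.mono (fun x y hxy => ?_) _ _ hda
      obtain ⟨⟨hxy, hxP, hyP⟩, hxc, hyc⟩ := hxy
      exact ⟨hxy, mem_erase.2 ⟨hxc, hxP⟩, mem_erase.2 ⟨hyc, hyP⟩⟩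
    obtain ⟨f', hf', hfix, hd⟩ := ih _ (erase_ssubset hcP) hda'
    have hclass : ∀ u, f' u = f v ↔ f u = f v := hfix _ (notMem_erase _ _)
    refine ⟨update f' v d, ?_, fun e he u => ?_, fun u hu => ?_⟩
    · rw [← (hclass v).2 rfl]
      exact hf'.recolor (mem_univ d) (mem_univ v) fun u _ hu => hv u (hd u hu)
    · rcases eq_or_ne u v with rfl | huv
      · simp [ne_of_mem_of_not_mem hdP he, ne_of_mem_of_not_mem hcP he]
      · rw [update_of_ne huv, hfix e fun he' => he (mem_of_mem_erase he')]
    · rcases eq_or_ne u v with rfl | huv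
      · rfl
      · rwa [update_of_ne huv, hclass] at hu

lemma exists_isEquitableOn_of_mem_accessible (h : IsNearlyEquitableOn G univ univ s a b f)
    (hb : b ∈ accessible G f a) : ∃ f', IsEquitableOn G univ (univ : Finset ι) s f' := by
  have hpath : ReflTransGen (confine (Movable G f) ↑(univ : Finset ι)) b a :=
    ReflTransGen.mono (fun x y hxy => ⟨hxy, by simp⟩) _ _ (mem_accessible.1 hb)
  obtain ⟨f', hf', -⟩ := h.exists_shift univ hpath
  exact ⟨f', isNearlyEquitableOn_self.1 hf'⟩

section Glue

variable [DecidableEq V] {S : Finset V} {C : Finset ι}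

lemma glue (hf : IsNearlyEquitableOn G S C s a b f)
    (hg : IsNearlyEquitableOn G Sᶜ Cᶜ s a b g) :
    IsNearlyEquitableOn G univ univ s a b (S.piecewise f g) := by
  simpa only [union_compl] using hf.piecewise hg disjoint_compl_right disjoint_compl_right

lemma exists_extend (hf : IsNearlyEquitableOn G S C s a b f) (hb : b ∉ C) (hb' : b' ∉ C)
    (hg : IsNearlyEquitableOn G Sᶜ Cᶜ s a b' g) :
    ∃ f', IsNearlyEquitableOn G univ univ s a b' f' ∧ (∀ v ∈ S, f' v = f v) ∧
      ∀ v ∉ S, f' v ∉ C := by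
  refine ⟨_, (hf.congr_right hb hb').glue hg, fun v hv => piecewise_eq_of_mem _ _ _ hv,
    fun v hv => ?_⟩
  rw [piecewise_eq_of_notMem _ _ _ hv]
  exact mem_compl.1 (hg.mem v (mem_compl.2 hv))

lemma exists_extend_insert (hf : IsNearlyEquitableOn G S C s a b f) (hb : b ∉ C) (ha : a ∈ C)
    (hc : c ∈ C) (hx : x ∉ S) (hfree : ∀ u ∈ S, f u = c → ¬ G.Adj x u)
    (hg : IsEquitableOn G (Sᶜ.erase x) Cᶜ s g) :
    ∃ f', IsNearlyEquitableOn G univ univ s a c f' ∧ (∀ v ∈ S, f' v = f v) ∧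
      ∀ v ∉ S, f' v ∈ C → f' v = c := by
  have notMem_compl : ∀ e ∈ C, e ∉ Cᶜ := fun e he he' => mem_compl.1 he' he
  rw [← compl_insert] at hg
  have hg' : IsNearlyEquitableOn G _ _ s a c g := (isNearlyEquitableOn_self.2 hg).congr_right
    (notMem_compl a ha) (notMem_compl c hc)
  refine ⟨_, (hf.insert_excess hb hc hx hfree).glue hg', fun v hv => ?_, fun v hv hvC => ?_⟩
  · rw [piecewise_eq_of_mem _ _ _ (mem_insert_of_mem hv), update_of_ne (ne_of_mem_of_not_mem hv hx)]
  · rcases eq_or_ne v x with rfl | hvx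
    · simp
    have hv' : v ∉ insert x S := fun hv' => hv (mem_of_mem_insert_of_ne hv' hvx)
    rw [piecewise_eq_of_notMem _ _ _ hv'] at hvC
    exact absurd hvC (mem_compl.1 (hg.mem v (mem_compl.2 hv')))

end Glue

lemma restrict_colored (h : IsNearlyEquitableOn G univ univ s a b f) (C : Finset ι) :
    IsNearlyEquitableOn G (colored f C) C s a b f :=
  h.restrict (subset_univ C)

lemma card_colored_add (h : IsNearlyEquitableOn G univ univ s a b f) (C : Finset ι) :
    #(colored f C) + (if a ∈ C then 1 else 0) = #C * s + (if b ∈ C then 1 else 0) :=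
  (h.restrict_colored C).card_add

lemma card_compl_colored_accessible [DecidableEq V] (h : IsNearlyEquitableOn G univ univ s a b f)
    (hb : b ∉ accessible G f a) :
    #(colored f (accessible G f a))ᶜ = #(accessible G f a)ᶜ * s + 1 := by
  have hcompl : (colored f (accessible G f a))ᶜ = colored f (accessible G f a)ᶜ := by
    ext v
    simp
  have hcard := h.card_colored_add (accessible G f a)ᶜ
  rwa [if_neg (by simp [ReflTransGen.refl]), if_pos (mem_compl.2 hb), ← hcompl] at hcard

end IsNearlyEquitableOn

end Accessible

section Exchange

open Finset Function Relation

variable {V ι : Type*} [Fintype V] [Fintype ι] [DecidableEq ι]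
  {G : SimpleGraph V} {s : ℕ} {f f' : V → ι} {a b : ι} {y z : V}

/-- The induction hypothesis of the main theorem: it holds for all proper induced subgraphs. -/
def EquitableBelow (G : SimpleGraph V) (ι : Type*) (s : ℕ) : Prop :=
  ∀ (S : Finset V) (C : Finset ι), S ⊂ univ → C.Nonempty → #S = #C * s → OreOn G S #C →
    ∃ g, IsEquitableOn G S C s g

lemma oreOn_compl_colored_accessible [DecidableEq V] (hOre : OreOn G univ (Fintype.card ι)) :
    OreOn G (colored f (accessible G f a))ᶜ #(accessible G f a)ᶜ := by
  intro u hu v hv huv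
  have hcard := card_add_card_compl (accessible G f a)
  have hu' := card_accessible_le_degIn (mem_compl.1 hu)
  have hv' := card_accessible_le_degIn (mem_compl.1 hv)
  have huv' := hOre u (mem_univ u) v (mem_univ v) huv
  rw [← degIn_add_degIn_compl G (colored f (accessible G f a)) u,
    ← degIn_add_degIn_compl G (colored f (accessible G f a)) v] at huv'
  omega

lemma IsNearlyEquitableOn.exists_isEquitableOn_compl_erase [DecidableEq V]
    (h : IsNearlyEquitableOn G univ univ s a b f) (hb : b ∉ accessible G f a)
    (ih : EquitableBelow G ι s) (hOre : OreOn G univ (Fintype.card ι))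
    (hy : y ∉ colored f (accessible G f a)) :
    ∃ g, IsEquitableOn G ((colored f (accessible G f a))ᶜ.erase y) (accessible G f a)ᶜ s g := by
  refine ih _ _ ?_ ⟨b, mem_compl.2 hb⟩ ?_
    ((oreOn_compl_colored_accessible hOre).mono (erase_subset _ _))
  · exact ssubset_univ_iff.2 fun huniv => notMem_erase y _ (huniv ▸ mem_univ y)
  · rw [card_erase_of_mem (mem_compl.2 hy), h.card_compl_colored_accessible hb, Nat.add_sub_cancel]

/-- Shift a vertex of the class of `e` towards `a` without touching the class of `z`, move `z` to
the freed place and `y` to the place of `z`. -/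
lemma IsNearlyEquitableOn.exists_isEquitableOn_of_solo
    (h : IsNearlyEquitableOn G univ univ s a b f) (hb : b ∉ accessible G f a)
    (ih : EquitableBelow G ι s) (hOre : OreOn G univ (Fintype.card ι))
    (hy : y ∉ colored f (accessible G f a)) (hz : IsTerminal (Movable G f) a (f z))
    (hyz : IsSoloNeighbor G f y z) {e : ι} (he : e ∈ accessible G f a) (hez : e ≠ f z)
    (hfree : ∀ u, f u = e → ¬ G.Adj z u) :
    ∃ f', IsEquitableOn G univ (univ : Finset ι) s f' := by
  classical
  obtain ⟨g, hg⟩ := h.exists_isEquitableOn_compl_erase hb ih hOre hy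
  set C := accessible G f a
  have hzC : f z ∈ C := mem_accessible.2 hz.1
  obtain ⟨f₁, hf₁, hfix, he₁⟩ := h.exists_shift (C.erase (f z)) (hz.path_accessible_erase he hez)
  have hclass : ∀ u, f₁ u = f z ↔ f u = f z := hfix _ (notMem_erase _ _)
  have hf₂ := hf₁.recolor (mem_univ e) (mem_univ z) fun u _ hu => hfree u (he₁ u hu)
  rw [(hclass z).2 rfl] at hf₂
  have hcolored : colored (update f₁ z e) C = colored f C := by
    ext v
    rcases eq_or_ne v z with rfl | hvz
    · simp [he, hzC]
    simp only [mem_colored, update_of_ne hvz]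
    rw [← not_iff_not]
    exact ⟨fun hv hv' => hv ((hfix _ (fun h' => hv (mem_of_mem_erase h')) v).1 rfl ▸ hv'),
      fun hv hv' => hv ((hfix _ (fun h' => hv (mem_of_mem_erase h')) v).2 rfl ▸ hv')⟩
  have hC := hcolored ▸ hf₂.restrict_colored C
  have hins := hC.insert_short hb hzC hy fun u _ hu hyu => by
    have huz : u ≠ z := fun huz => hez (by rwa [huz, update_self] at hu)
    rw [update_of_ne huz, hclass] at hu
    exact huz (hyz.2 u hu hyu)
  rw [← compl_insert] at hg
  exact ⟨_, isNearlyEquitableOn_self.1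
    ((isNearlyEquitableOn_self (a := a).2 hins).glue (isNearlyEquitableOn_self.2 hg))⟩

lemma card_accessible_le_degIn_add_one (hz : f z ∈ accessible G f a)
    (hadj : ∀ e ∈ accessible G f a, e ≠ f z → ∃ u, f u = e ∧ G.Adj z u) :
    #(accessible G f a) ≤ degIn G (colored f (accessible G f a)) z + 1 := by
  have hle := card_le_degIn_colored (G := G) (x := z) (erase_subset (f z) (accessible G f a))
    fun e he => hadj e (mem_of_mem_erase he) (ne_of_mem_erase he)
  rw [card_erase_of_mem hz] at hle
  omega

lemma degIn_compl_erase_lt [DecidableEq V] (hOre : OreOn G univ (Fintype.card ι))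
    (hy : y ∉ colored f (accessible G f a)) (hz : f z ∈ accessible G f a) (hyz : G.Adj y z)
    (hadj : ∀ e ∈ accessible G f a, e ≠ f z → ∃ u, f u = e ∧ G.Adj z u) :
    degIn G ((colored f (accessible G f a))ᶜ.erase y) z < #(accessible G f a)ᶜ * 2 := by
  classical
  have hcard := card_add_card_compl (accessible G f a)
  have hAy := card_accessible_le_degIn hy
  have hAz := card_accessible_le_degIn_add_one hz hadj
  have hBz := degIn_erase_add (G := G) (x := z) (mem_compl.2 hy)
  have hsum := hOre y (mem_univ y) z (mem_univ z) hyz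
  rw [← degIn_add_degIn_compl G (colored f (accessible G f a)) y,
    ← degIn_add_degIn_compl G (colored f (accessible G f a)) z] at hsum
  rw [if_pos hyz.symm] at hBz
  omega

/-- The hypotheses make the degree condition tight for the edge `zv`. -/
lemma isSoloNeighbor_of_displaced [DecidableEq V] (hOre : OreOn G univ (Fintype.card ι))
    (hy : y ∉ colored f (accessible G f a)) (hz : f z ∈ accessible G f a) (hyz : G.Adj y z)
    (hadj : ∀ e ∈ accessible G f a, e ≠ f z → ∃ u, f u = e ∧ G.Adj z u) {v : V}
    (hv : v ∉ colored f (accessible G f a)) (hzv : G.Adj z v)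
    (hdz : #(accessible G f a)ᶜ ≤ degIn G ((colored f (accessible G f a))ᶜ.erase y) z)
    (hdv : #(accessible G f a)ᶜ ≤ degIn G ((colored f (accessible G f a))ᶜ.erase y) v + 1) :
    ¬ G.Adj v y ∧ IsSoloNeighbor G f v z := by
  classical
  have hcard := card_add_card_compl (accessible G f a)
  have hAv := card_accessible_le_degIn hv
  have hAz := card_accessible_le_degIn_add_one hz hadj
  have hBz := degIn_erase_add (G := G) (x := z) (mem_compl.2 hy)
  have hBv := degIn_erase_add (G := G) (x := v) (mem_compl.2 hy)
  have hsum := hOre z (mem_univ z) v (mem_univ v) hzv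
  rw [← degIn_add_degIn_compl G (colored f (accessible G f a)) z,
    ← degIn_add_degIn_compl G (colored f (accessible G f a)) v] at hsum
  rw [if_pos hyz.symm] at hBz
  refine ⟨fun hvy => ?_, hzv.symm, fun u hu hvu => ?_⟩
  · rw [if_pos hvy] at hBv
    omega
  · by_contra huz
    have hAv' : #(accessible G f a) + #{f z} ≤ degIn G (colored f (accessible G f a)) v := by
      refine card_accessible_add_card_le_degIn hv (singleton_subset_iff.2 hz) ?_
      simp only [mem_singleton, forall_eq]
      by_contra! hlt
      exact huz (degIn_le_one.1 (Nat.lt_succ_iff.1 hlt) u (by simpa [hu] using hz) z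
        (by simpa using hz) hvu hzv.symm)
    rw [card_singleton] at hAv'
    omega

/-- Exchange `y` and `z`; a vertex displaced on the other side joins the class of `z`. -/
lemma IsNearlyEquitableOn.exists_exchange [DecidableEq V]
    (h : IsNearlyEquitableOn G univ univ s a b f) (hb : b ∉ accessible G f a)
    (ih : EquitableBelow G ι s) (hOre : OreOn G univ (Fintype.card ι))
    (hy : y ∉ colored f (accessible G f a)) (hz : f z ∈ accessible G f a)
    (hyz : IsSoloNeighbor G f y z)
    (hadj : ∀ e ∈ accessible G f a, e ≠ f z → ∃ u, f u = e ∧ G.Adj z u) :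
    ∃ f' b', IsNearlyEquitableOn G univ univ s a b' f' ∧
      (∀ v ∈ insert y ((colored f (accessible G f a)).erase z), f' v = update f y (f z) v) ∧
      ∀ v ∉ insert y ((colored f (accessible G f a)).erase z),
        f' v ∈ accessible G f a → f' v = f z ∧ b' = f z := by
  obtain ⟨g, hg⟩ := h.exists_isEquitableOn_compl_erase hb ih hOre hy
  have hdeg := degIn_compl_erase_lt hOre hy hz hyz.1 hadj
  have hdisplaced := fun v => isSoloNeighbor_of_displaced (v := v) hOre hy hz hyz.1 hadj
  have ha : a ∉ (accessible G f a)ᶜ := fun ha => mem_compl.1 ha self_mem_accessible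
  have hleft := h.restrict_colored (accessible G f a)
  set A := colored f (accessible G f a)
  have hzA : z ∈ A := mem_colored.2 hz
  have hcompl : (insert y (A.erase z))ᶜ = insert z (Aᶜ.erase y) := by
    rw [compl_insert, compl_erase, erase_insert_of_ne hyz.1.ne']
  replace hleft := hleft.exchange hzA hy fun u _ => hyz.2 u
  rcases hg.exists_absorb_or_displace ha (fun h' => mem_compl.1 (mem_of_mem_erase h') hzA) hdeg with
    ⟨b', hb', g', hg'⟩ | ⟨hdz, v, hv, hzv, hdv, g', hg'⟩
  · obtain ⟨f', hf', hS, hSc⟩ := hleft.exists_extend hb (mem_compl.1 hb') (hcompl ▸ hg')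
    exact ⟨f', b', hf', hS, fun v hv hv' => absurd hv' (hSc v hv)⟩
  · have hvA : v ∉ A := mem_compl.1 (mem_of_mem_erase hv)
    obtain ⟨hvy, hvz⟩ := hdisplaced v hvA hzv hdz hdv
    rw [← erase_insert_of_ne hzv.ne, ← hcompl] at hg'
    have hfree : ∀ u ∈ insert y (A.erase z), update f y (f z) u = f z → ¬ G.Adj v u := by
      intro u hu huz hvu
      rcases eq_or_ne u y with rfl | huy
      · exact hvy hvu
      · rw [update_of_ne huy] at huz
        exact ne_of_mem_erase (mem_of_mem_insert_of_ne hu huy) (hvz.2 u huz hvu)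
    obtain ⟨f', hf', hS, hSc⟩ := hleft.exists_extend_insert hb self_mem_accessible hz
      (by simp [ne_of_mem_erase hv, hvA]) hfree hg'
    exact ⟨f', f z, hf', hS, fun u hu hu' => ⟨hSc u hu hu', rfl⟩⟩

section Transfer

variable [DecidableEq V]

lemma eq_iff_of_exchange (hy : y ∉ colored f (accessible G f a))
    (hS : ∀ v ∈ insert y ((colored f (accessible G f a)).erase z), f' v = update f y (f z) v)
    (hSc : ∀ v ∉ insert y ((colored f (accessible G f a)).erase z),
      f' v ∈ accessible G f a → f' v = f z)
    {c : ι} (hc : c ∈ accessible G f a) (hcz : c ≠ f z) (v : V) : f' v = c ↔ f v = c := by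
  rw [mem_colored] at hy
  by_cases hv : v ∈ insert y ((colored f (accessible G f a)).erase z)
  · rw [hS v hv]
    rcases eq_or_ne v y with rfl | hvy
    · rw [update_self]
      exact ⟨fun h => absurd h.symm hcz, fun h => absurd (h ▸ hc) hy⟩
    · rw [update_of_ne hvy]
  · refine ⟨fun h => absurd (h ▸ hSc v hv (h ▸ hc)) hcz, fun h => absurd ?_ hv⟩
    refine mem_insert_of_mem (mem_erase.2 ⟨?_, mem_colored.2 (h ▸ hc)⟩)
    rintro rfl
    exact hcz h.symm

lemma accessible_subset_of_exchange (hy : y ∉ colored f (accessible G f a))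
    (hz : IsTerminal (Movable G f) a (f z))
    (hadj : ∀ e ∈ accessible G f a, e ≠ f z → ∃ u, f u = e ∧ G.Adj z u)
    (hS : ∀ v ∈ insert y ((colored f (accessible G f a)).erase z), f' v = update f y (f z) v)
    (hSc : ∀ v ∉ insert y ((colored f (accessible G f a)).erase z),
      f' v ∈ accessible G f a → f' v = f z) :
    accessible G f a ⊆ accessible G f' a := by
  have hclass := fun {c} => eq_iff_of_exchange (c := c) hy hS hSc
  have mem_of_ne : ∀ c ∈ accessible G f a, c ≠ f z → c ∈ accessible G f' a := by
    intro c hc hcz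
    refine mem_accessible.2 (ReflTransGen.mono ?_ _ _ (hz.path_accessible_erase hc hcz))
    rintro d e ⟨⟨hde, v, hv, hfree⟩, hd, he⟩
    obtain ⟨⟨hdz, hd⟩, hez, he⟩ := And.intro (mem_erase.1 hd) (mem_erase.1 he)
    exact ⟨hde, v, (hclass hd hdz v).2 hv, fun u hu => hfree u ((hclass he hez u).1 hu)⟩
  intro c hc
  rcases eq_or_ne c (f z) with rfl | hcz
  · rcases ReflTransGen.cases_head hz.1 with hza | ⟨e, ⟨hze, w, hw, hfree⟩, he⟩
    · exact hza ▸ self_mem_accessible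
    · have he' := mem_accessible.2 he
      have hwz : w ≠ z := by
        rintro rfl
        obtain ⟨u, hu, hwu⟩ := hadj e he' hze.symm
        exact hfree u hu hwu
      have hwS : f' w = f z := by
        have hwA : w ∈ colored f (accessible G f a) := mem_colored.2 (hw ▸ hc)
        rw [hS w (mem_insert_of_mem (mem_erase.2 ⟨hwz, hwA⟩)),
          update_of_ne (ne_of_mem_of_not_mem hwA hy), hw]
      have hmov : Movable G f' (f z) e :=
        ⟨hze, w, hwS, fun u hu => hfree u ((hclass he' hze.symm u).1 hu)⟩
      exact mem_accessible.2 (.head hmov (mem_accessible.1 (mem_of_ne e he' hze.symm)))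
  · exact mem_of_ne c hc hcz

end Transfer

end Exchange

section Optimal

open Finset Function Relation

variable {V ι : Type*} [Fintype V] [DecidableEq V] [Fintype ι] [DecidableEq ι]
  {G : SimpleGraph V} {s : ℕ} {f : V → ι} {a b : ι} {y z : V}

/-- Among the nearly equitable colourings whose short class is that of `a`, no colouring extends
the set of accessible colours of `f`, nor keeps it and has fewer edges leaving its classes. -/
def IsOptimal (G : SimpleGraph V) (s : ℕ) (a : ι) (f : V → ι) : Prop :=
  ∀ f' b', IsNearlyEquitableOn G univ univ s a b' f' →
    accessible G f a ⊆ accessible G f' a → accessible G f' a = accessible G f a ∧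
      cut G (colored f (accessible G f a)) ≤ cut G (colored f' (accessible G f' a))

lemma IsNearlyEquitableOn.exists_isOptimal (h : IsNearlyEquitableOn G univ univ s a b f) :
    ∃ f' b', IsNearlyEquitableOn G univ univ s a b' f' ∧ IsOptimal G s a f' := by
  obtain ⟨f', ⟨b', hf'⟩, hmin⟩ := exists_minimalFor_of_wellFoundedLT
    (fun f' => ∃ b', IsNearlyEquitableOn G univ univ s a b' f')
    (fun f' => toLex (#(accessible G f' a)ᶜ, cut G (colored f' (accessible G f' a)))) ⟨f, b, h⟩
  refine ⟨f', b', hf', fun f'' b'' hf'' hsub => ?_⟩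
  have hle := (le_total _ _).elim id (hmin ⟨b'', hf''⟩)
  rw [Prod.Lex.toLex_le_toLex] at hle
  have hcard := card_le_card (compl_subset_compl.2 hsub)
  obtain ⟨heq, hcut⟩ := hle.resolve_left hcard.not_gt
  have hcompl := eq_of_subset_of_card_le (compl_subset_compl.2 hsub) heq.le
  exact ⟨compl_injective hcompl, hcut⟩

/-- Otherwise exchanging `y` and `z` would decrease the cut. -/
lemma IsNearlyEquitableOn.degIn_compl_add_degIn_le (h : IsNearlyEquitableOn G univ univ s a b f)
    (hf : IsOptimal G s a f) (hneq : ¬ ∃ f', IsEquitableOn G univ (univ : Finset ι) s f')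
    (ih : EquitableBelow G ι s) (hOre : OreOn G univ (Fintype.card ι))
    (hy : y ∉ colored f (accessible G f a)) (hz : IsTerminal (Movable G f) a (f z))
    (hyz : IsSoloNeighbor G f y z) :
    degIn G (colored f (accessible G f a))ᶜ z + degIn G (colored f (accessible G f a)) y ≤
      Fintype.card ι := by
  have hb : b ∉ accessible G f a := fun hb => hneq (h.exists_isEquitableOn_of_mem_accessible hb)
  have hzC : f z ∈ accessible G f a := mem_accessible.2 hz.1
  have hadj : ∀ e ∈ accessible G f a, e ≠ f z → ∃ u, f u = e ∧ G.Adj z u := by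
    intro e he hez
    by_contra! hfree
    exact hneq (h.exists_isEquitableOn_of_solo hb ih hOre hy hz hyz he hez hfree)
  obtain ⟨f', b', hf', hS, hSc⟩ := h.exists_exchange hb ih hOre hy hzC hyz hadj
  have hsub := accessible_subset_of_exchange hy hz hadj hS fun v hv hv' => (hSc v hv hv').1
  obtain ⟨hacc, hcut⟩ := hf f' b' hf' hsub
  have hb' : b' ≠ f z := fun hb' =>
    hneq (hf'.exists_isEquitableOn_of_mem_accessible (hb' ▸ hsub hzC))
  have hA : colored f' (accessible G f' a) =
      insert y ((colored f (accessible G f a)).erase z) := by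
    ext v
    rw [mem_colored, hacc]
    refine ⟨fun hv => by_contra fun hvS => hb' (hSc v hvS hv).2, fun hv => ?_⟩
    rw [hS v hv]
    rcases eq_or_ne v y with rfl | hvy
    · rwa [update_self]
    · rw [update_of_ne hvy]
      exact mem_colored.1 (mem_of_mem_erase (mem_of_mem_insert_of_ne hv hvy))
  rw [hA] at hcut
  have hexch := cut_exchange (mem_colored.2 hzC) hy hyz.1
  have hsum := hOre y (mem_univ y) z (mem_univ z) hyz.1
  rw [← degIn_add_degIn_compl G (colored f (accessible G f a)) y,
    ← degIn_add_degIn_compl G (colored f (accessible G f a)) z] at hsum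
  omega

end Optimal

section Counting

open Finset Relation

lemma div_le_weight {q t n : ℚ} (hq : 0 < q) (hn : 0 ≤ n) (hnt : n ≤ t) (h : n < t → n < q) :
    t / q ≤ n * (2 * (1 / (2 * q + t - n))) + (t - n) * (1 / (q - n)) := by
  rcases hnt.eq_or_lt with rfl | hlt
  · rw [add_sub_cancel_right, sub_self, zero_mul, add_zero]
    exact le_of_eq (by field_simp)
  · have hqn : 0 < q - n := sub_pos.2 (h hlt)
    have hqtn : 0 < 2 * q + t - n := by linarith
    have ht : 0 < t := hn.trans_lt hlt
    have hdiff : n * (2 * (1 / (2 * q + t - n))) + (t - n) * (1 / (q - n)) - t / q =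
        n * ((q + t) * (t - n)) / ((2 * q + t - n) * (q - n) * q) := by
      field_simp
      ring
    rw [← sub_nonneg, hdiff]
    have : 0 < t - n := sub_pos.2 hlt
    positivity

lemma card_mul_add_card_mul_le_sum {V ι : Type*} {X : Finset V} {f : V → ι} {T N : Finset ι}
    {w : V → ℚ} {α β : ℚ} (hNT : N ⊆ T) (hf : ∀ x ∈ X, f x ∈ T) (hα : 0 ≤ α)
    (hw : ∀ x ∈ X, α ≤ w x) (hN : ∀ c ∈ N, 2 ≤ #(classIn X f c))
    (hβ : ∀ c ∈ T, c ∉ N → ∃ x ∈ classIn X f c, β ≤ w x) :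
    #N * (2 * α) + (#T - #N) * β ≤ ∑ x ∈ X, w x := by
  classical
  calc (#N * (2 * α) + (#T - #N) * β : ℚ)
      = ∑ _c ∈ N, 2 * α + ∑ _c ∈ T \ N, β := by
        rw [sum_const, sum_const, nsmul_eq_mul, nsmul_eq_mul, cast_card_sdiff hNT]
    _ ≤ ∑ c ∈ N, ∑ x ∈ classIn X f c, w x + ∑ c ∈ T \ N, ∑ x ∈ classIn X f c, w x := by
        refine add_le_add (sum_le_sum fun c hc => ?_) (sum_le_sum fun c hc => ?_)
        · calc 2 * α ≤ #(classIn X f c) * α := by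
                gcongr
                exact_mod_cast hN c hc
            _ ≤ ∑ x ∈ classIn X f c, w x := by
                rw [← nsmul_eq_mul]
                exact card_nsmul_le_sum _ _ _ fun x hx => hw x (classIn_subset hx)
        · obtain ⟨x, hx, hβx⟩ := hβ c (mem_sdiff.1 hc).1 (mem_sdiff.1 hc).2
          exact hβx.trans (single_le_sum (f := w)
            (fun x hx => hα.trans (hw x (classIn_subset hx))) hx)
    _ = ∑ x ∈ X, w x := by
        rw [add_comm, sum_sdiff hNT, ← sum_fiberwise_of_maps_to hf w]
        rfl

lemma card_div_le_sum_inv {V ι : Type*} {X : Finset V} {f : V → ι} {T N : Finset ι} {d : V → ℕ}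
    {q : ℕ} (hq : 0 < q) (hNT : N ⊆ T) (hf : ∀ x ∈ X, f x ∈ T) (hd : ∀ x ∈ X, 0 < d x)
    (hd' : ∀ x ∈ X, d x + #N ≤ 2 * q + #T) (hN : ∀ c ∈ N, 2 ≤ #(classIn X f c))
    (hsolo : ∀ c ∈ T, c ∉ N → ∃ x ∈ classIn X f c, d x + #N ≤ q) :
    (#T / q : ℚ) ≤ ∑ x ∈ X, (1 / d x : ℚ) := by
  have hcard : #N ≤ #T := card_le_card hNT
  have hlt : #N < #T → #N < q := by
    intro hlt
    obtain ⟨c, hc, hcN⟩ := exists_mem_notMem_of_card_lt_card hlt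
    obtain ⟨x, hx, hxq⟩ := hsolo c hc hcN
    have := hd x (classIn_subset hx)
    omega
  have hcardℚ : (#N : ℚ) ≤ #T := mod_cast hcard
  have hqℚ : (0 : ℚ) < q := mod_cast hq
  refine (div_le_weight (n := #N) hqℚ (by positivity) hcardℚ (mod_cast hlt)).trans
    (card_mul_add_card_mul_le_sum hNT hf ?_ (fun x hx => ?_) hN fun c hc hcN => ?_)
  · exact one_div_nonneg.2 (by linarith)
  · have : (d x + #N : ℚ) ≤ 2 * q + #T := mod_cast hd' x hx
    exact one_div_le_one_div_of_le (mod_cast hd x hx) (by linarith)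
  · obtain ⟨x, hx, hxq⟩ := hsolo c hc hcN
    have : (d x + #N : ℚ) ≤ q := mod_cast hxq
    exact ⟨x, hx, one_div_le_one_div_of_le (mod_cast hd x (classIn_subset hx)) (by linarith)⟩

lemma sum_sum_inv_degIn_le_card {V : Type*} (G : SimpleGraph V) [DecidableRel G.Adj]
    (B X : Finset V) :
    ∑ y ∈ B, ∑ x ∈ X with G.Adj y x, (1 / degIn G B x : ℚ) ≤ #X := by
  calc ∑ y ∈ B, ∑ x ∈ X with G.Adj y x, (1 / degIn G B x : ℚ)
      = ∑ x ∈ X, ∑ y ∈ B with G.Adj x y, (1 / degIn G B x : ℚ) :=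
        sum_comm' fun x y => by simp only [mem_filter, G.adj_comm x y]; tauto
    _ = ∑ x ∈ X, (degIn G B x / degIn G B x : ℚ) := sum_congr rfl fun x _ => by
        rw [sum_const, nsmul_eq_mul, mul_one_div, degIn]
        congr!
    _ ≤ ∑ _x ∈ X, (1 : ℚ) := sum_le_sum fun x _ => div_self_le_one _
    _ = #X := by simp

variable {V ι : Type*} [Fintype V] [Fintype ι] [DecidableEq ι] {G : SimpleGraph V} {s : ℕ}
  {f : V → ι} {a b c u : ι} {x y : V} {T : Finset ι}

lemma card_accessible_le_degIn_add_card (hT : T ⊆ accessible G f a)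
    (hclosed : ∀ c ∈ T, ∀ d ∈ accessible G f a, Movable G f c d → d ∈ T ∨ d = u)
    (hx : f x ∈ T) :
    #(accessible G f a) ≤ degIn G (colored f (accessible G f a)) x + #T + 1 := by
  have hle : #((accessible G f a \ T).erase u) ≤ degIn G (colored f (accessible G f a)) x := by
    refine card_le_degIn_colored ((erase_subset _ _).trans sdiff_subset) fun d hd => ?_
    obtain ⟨hdu, hd, hdT⟩ : d ≠ u ∧ d ∈ accessible G f a ∧ d ∉ T := by simpa using hd
    by_contra! hfree
    have hmov : Movable G f (f x) d := ⟨ne_of_mem_of_not_mem hx hdT, x, rfl, hfree⟩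
    exact (hclosed _ hx d hd hmov).elim hdT hdu
  have herase := pred_card_le_card_erase (s := accessible G f a \ T) (a := u)
  have hsdiff := card_sdiff_add_card_eq_card hT
  omega

lemma exists_isSoloNeighbor (hy : y ∉ colored f (accessible G f a)) (hc : c ∈ accessible G f a)
    (hlt : degIn G (classIn (colored f (accessible G f a)) f c) y < 2) :
    ∃ z, f z = c ∧ IsSoloNeighbor G f y z := by
  obtain ⟨z, rfl, hyz⟩ := exists_adj_of_notMem_colored_accessible hy hc
  have hunique := degIn_le_one.1 (Nat.lt_succ_iff.1 hlt)
  exact ⟨z, rfl, hyz, fun u hu hyu =>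
    hunique u (by simpa [hu] using hc) z (by simpa using hc) hyu hyz⟩

lemma card_div_card_le_sum [DecidableEq V] [DecidableRel G.Adj]
    (hOre : OreOn G univ (Fintype.card ι)) (hT : T ⊆ accessible G f a)
    (hclosed : ∀ c ∈ T, ∀ d ∈ accessible G f a, Movable G f c d → d ∈ T ∨ d = u)
    (hsolo : ∀ z, f z ∈ T → IsSoloNeighbor G f y z →
      degIn G (colored f (accessible G f a))ᶜ z + degIn G (colored f (accessible G f a)) y ≤
        Fintype.card ι)
    (hb : b ∉ accessible G f a) (hy : y ∉ colored f (accessible G f a)) :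
    (#T / #(accessible G f a)ᶜ : ℚ) ≤ ∑ x ∈ colored f T with G.Adj y x,
      (1 / degIn G (colored f (accessible G f a))ᶜ x : ℚ) := by
  have hcard := card_add_card_compl (accessible G f a)
  have hAx := fun {x} => card_accessible_le_degIn_add_card (x := x) hT hclosed
  have hexists := fun {c} => exists_isSoloNeighbor (c := c) hy
  have hAy := fun {N} => card_accessible_add_card_le_degIn (N := N) hy
  set A := colored f (accessible G f a)
  set N : Finset ι := {c ∈ T | 2 ≤ degIn G (classIn A f c) y} with hN
  have hNT : N ⊆ T := filter_subset _ _
  replace hAy := hAy (hNT.trans hT) fun c hc => (mem_filter.1 hc).2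
  refine card_div_le_sum_inv (f := f) (N := N) (card_pos.2 ⟨b, mem_compl.2 hb⟩) hNT
    (fun x hx => ?_) (fun x hx => ?_) (fun x hx => ?_) (fun c hc => ?_) fun c hc hcN => ?_
  · exact mem_colored.1 (mem_filter.1 hx).1
  · exact degIn_pos.2 ⟨y, mem_compl.2 hy, (mem_filter.1 hx).2.symm⟩
  · obtain ⟨hxT, hyx⟩ := mem_filter.1 hx
    have hsum := hOre y (mem_univ y) x (mem_univ x) hyx
    rw [← degIn_add_degIn_compl G A y, ← degIn_add_degIn_compl G A x] at hsum
    have := hAx (mem_colored.1 hxT)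
    omega
  · refine (mem_filter.1 hc).2.trans (card_le_card fun x hx => ?_)
    obtain ⟨⟨-, rfl⟩, hyx⟩ : (x ∈ A ∧ f x = c) ∧ G.Adj y x := by simpa using hx
    simpa [hyx] using hNT hc
  · obtain ⟨z, rfl, hyz⟩ := hexists (hT hc) (by simpa [hN, hc] using hcN)
    have := hsolo z hc hyz
    exact ⟨z, by simp [hc, hyz.1], by omega⟩

lemma IsNearlyEquitableOn.false_of_degIn_le [DecidableEq V]
    (h : IsNearlyEquitableOn G univ univ s a b f) (hb : b ∉ accessible G f a)
    (hOre : OreOn G univ (Fintype.card ι)) (hT : T ⊆ accessible G f a) (hTne : T.Nonempty)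
    (hclosed : ∀ c ∈ T, ∀ d ∈ accessible G f a, Movable G f c d → d ∈ T ∨ d = u)
    (hsolo : ∀ y ∉ colored f (accessible G f a), ∀ z, f z ∈ T → IsSoloNeighbor G f y z →
      degIn G (colored f (accessible G f a))ᶜ z + degIn G (colored f (accessible G f a)) y ≤
        Fintype.card ι) : False := by
  classical
  have hq : 0 < #(accessible G f a)ᶜ := card_pos.2 ⟨b, mem_compl.2 hb⟩
  have hX : #(colored f T) ≤ #T * s := by
    have := h.card_colored_add T
    rw [if_neg fun hbT => hb (hT hbT)] at this
    omega
  have hweight : (#(colored f (accessible G f a))ᶜ : ℚ) * (#T / #(accessible G f a)ᶜ) ≤ #T * s :=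
    calc _ ≤ ∑ y ∈ (colored f (accessible G f a))ᶜ, ∑ x ∈ colored f T with G.Adj y x,
            (1 / degIn G (colored f (accessible G f a))ᶜ x : ℚ) := by
          rw [← nsmul_eq_mul]
          exact card_nsmul_le_sum _ _ _ fun y hy => card_div_card_le_sum hOre hT hclosed
            (hsolo y (mem_compl.1 hy)) hb (mem_compl.1 hy)
      _ ≤ #(colored f T) := sum_sum_inv_degIn_le_card G _ _
      _ ≤ #T * s := mod_cast hX
  have hqℚ : (0 : ℚ) < #(accessible G f a)ᶜ := mod_cast hq
  have hTℚ : (0 : ℚ) < #T := mod_cast hTne.card_pos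
  rw [h.card_compl_colored_accessible hb, ← mul_div_assoc, div_le_iff₀ hqℚ] at hweight
  push_cast at hweight
  linarith

lemma IsNearlyEquitableOn.exists_isEquitableOn (h : IsNearlyEquitableOn G univ univ s a b f)
    (ih : EquitableBelow G ι s) (hOre : OreOn G univ (Fintype.card ι)) :
    ∃ f', IsEquitableOn G univ (univ : Finset ι) s f' := by
  classical
  by_contra hneq
  obtain ⟨f', b', hf', hopt⟩ := h.exists_isOptimal
  obtain ⟨T, u, hTne, hterm, hclosed⟩ := exists_isTerminal_closed (Movable G f') a
  have hb' : b' ∉ accessible G f' a := fun hb' =>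
    hneq (hf'.exists_isEquitableOn_of_mem_accessible hb')
  refine hf'.false_of_degIn_le (T := T.toFinset) (u := u) hb' hOre (fun c hc => ?_)
    (by simpa using hTne) (fun c hc d hd hcd => ?_) fun y hy z hz hyz => ?_
  · exact mem_accessible.2 (hterm c (Set.mem_toFinset.1 hc)).1
  · simpa using hclosed c (Set.mem_toFinset.1 hc) d (mem_accessible.1 hd) hcd
  · exact hf'.degIn_compl_add_degIn_le hopt hneq ih hOre hy (hterm _ (Set.mem_toFinset.1 hz)) hyz

end Counting

section Main

open Finset Function

universe u v

variable {V : Type u} {ι : Type v} {G : SimpleGraph V} {s : ℕ}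

lemma card_filter_subtype (S : Finset V) (p : V → Prop) [DecidablePred p] :
    #{v : S | p v} = #{v ∈ S | p v} := by
  rw [← card_map (Embedding.subtype (· ∈ S))]
  congr 1
  ext v
  simp [and_comm]

lemma OreOn.comap_subtype {S : Finset V} {k : ℕ} (h : OreOn G S k) :
    OreOn (G.comap ((↑) : S → V)) univ k := by
  classical
  have hdeg : ∀ x : S, degIn (G.comap ((↑) : S → V)) univ x = degIn G S x := fun x =>
    card_filter_subtype S (G.Adj x)
  intro x _ y _ hxy
  rw [hdeg, hdeg]
  exact h x x.2 y y.2 hxy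

lemma IsEquitableOn.exists_of_comap_subtype {S : Finset V} {C : Finset ι} (hC : C.Nonempty)
    {g : S → C} (hg : IsEquitableOn (G.comap ((↑) : S → V)) univ univ s g) :
    ∃ f, IsEquitableOn G S C s f := by
  classical
  obtain ⟨c₀, -⟩ := hC
  let f : V → ι := fun v => if hv : v ∈ S then g ⟨v, hv⟩ else c₀
  have hf : ∀ v : S, f v = g v := fun v => dif_pos v.2
  refine ⟨f, ⟨fun v hv => ?_, fun x hx y hy hxy => ?_⟩, fun c hc => ?_⟩
  · exact hf ⟨v, hv⟩ ▸ (g ⟨v, hv⟩).2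
  · rw [hf ⟨x, hx⟩, hf ⟨y, hy⟩]
    exact Subtype.coe_ne_coe.2 (hg.ne_of_adj ⟨x, hx⟩ (mem_univ _) ⟨y, hy⟩ (mem_univ _) hxy)
  · rw [← hg.card_class ⟨c, hc⟩ (mem_univ _), classIn, ← card_filter_subtype]
    congr 1
    ext v
    simp only [mem_filter_univ, mem_classIn, mem_univ, true_and, hf, Subtype.ext_iff]

variable [Fintype V] [Fintype ι]

lemma exists_isEquitableOn_bot (hcard : Fintype.card V = Fintype.card ι * s) :
    ∃ f, IsEquitableOn (⊥ : SimpleGraph V) univ (univ : Finset ι) s f := by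
  classical
  have e : V ≃ ι × Fin s := Fintype.equivOfCardEq (by simp [hcard])
  refine ⟨fun v => (e v).1, ⟨fun v _ => mem_univ _, fun x _ y _ hxy => hxy.elim⟩, fun c _ => ?_⟩
  rw [← card_map e.toEmbedding]
  have hfibre : (classIn univ (fun v => (e v).1) c).map e.toEmbedding = {c} ×ˢ univ := by
    ext ⟨d, i⟩
    simp [eq_comm]
  rw [hfibre, card_product, card_singleton, card_univ, Fintype.card_fin, one_mul]

lemma exists_isEquitableOn_of_deleteEdges (ih : EquitableBelow G ι s)
    (hOre : OreOn G univ (Fintype.card ι)) {x y : V} (hxy : G.Adj x y)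
    (hx : degIn G univ x < Fintype.card ι) {f : V → ι}
    (hf : IsEquitableOn (G.deleteEdges {s(x, y)}) univ univ s f) :
    ∃ f', IsEquitableOn G univ (univ : Finset ι) s f' := by
  classical
  obtain ⟨b, -, hb⟩ := exists_degIn_classIn_lt (C := univ) (n := 1) (by simpa using hx) f
  rw [Nat.lt_one_iff, degIn_eq_zero] at hb
  have hfree : ∀ u, f u = b → ¬ G.Adj x u := fun u hu => hb u (mem_classIn.2 ⟨mem_univ u, hu⟩)
  have hrecolor := (isNearlyEquitableOn_self (a := b).2 hf).recolor (mem_univ b) (mem_univ x)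
    fun u _ hu hxu => hfree u hu (G.deleteEdges_le _ hxu)
  have hne : update f x b x ≠ update f x b y := by
    rw [update_self, update_of_ne hxy.ne']
    exact fun hy => hfree y hy.symm hxy
  exact (hrecolor.of_deleteEdges hne).exists_isEquitableOn ih hOre

lemma exists_isEquitableOn_of_equitableBelow (ih : ∀ G : SimpleGraph V, EquitableBelow G ι s)
    (hcard : Fintype.card V = Fintype.card ι * s) (hOre : OreOn G univ (Fintype.card ι)) :
    ∃ f, IsEquitableOn G univ (univ : Finset ι) s f := by
  induction G using WellFoundedLT.induction with
  | ind G ihG =>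
    rcases eq_or_ne G ⊥ with rfl | hG
    · exact exists_isEquitableOn_bot hcard
    have hdelete : ∀ x y, G.Adj x y → degIn G univ x < Fintype.card ι →
        ∃ f, IsEquitableOn G univ (univ : Finset ι) s f := by
      intro x y hxy hx
      have hlt : G.deleteEdges {s(x, y)} < G := by
        refine (G.deleteEdges_le _).lt_of_not_ge fun hle => ?_
        simpa using hle hxy
      obtain ⟨f, hf⟩ := ihG _ hlt (hOre.anti (G.deleteEdges_le _))
      exact exists_isEquitableOn_of_deleteEdges (ih G) hOre hxy hx hf
    obtain ⟨x, y, hxy⟩ := SimpleGraph.ne_bot_iff_exists_adj.1 hG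
    have hsum := hOre x (mem_univ x) y (mem_univ y) hxy
    rcases lt_or_ge (degIn G univ x) (Fintype.card ι) with hx | hx
    · exact hdelete x y hxy hx
    · exact hdelete y x hxy.symm (by omega)

theorem exists_isEquitableOn_of_oreOn (G : SimpleGraph V)
    (hcard : Fintype.card V = Fintype.card ι * s) (hOre : OreOn G univ (Fintype.card ι)) :
    ∃ f, IsEquitableOn G univ (univ : Finset ι) s f := by
  induction hn : Fintype.card V using Nat.strong_induction_on generalizing V ι with
  | _ n ih =>
    refine exists_isEquitableOn_of_equitableBelow (fun G S C hS hC hSC hOre => ?_) hcard hOre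
    have hlt : Fintype.card S < n := by
      rw [Fintype.card_coe, ← hn]
      exact card_lt_card hS
    obtain ⟨g, hg⟩ := ih _ hlt (ι := C) (G.comap ((↑) : S → V)) (by simpa using hSC)
      (by simpa using hOre.comap_subtype) rfl
    exact hg.exists_of_comap_subtype hC

end Main

section Packing

open Finset Function

/-- **Kierstead–Kostochka**: the Ore-type version of the Hajnal–Szemerédi theorem. -/
theorem exists_equitable_coloring {V ι : Type*} [Fintype V] [Fintype ι] (G : SimpleGraph V)
    [DecidableRel G.Adj] {s : ℕ} (hcard : Fintype.card V = Fintype.card ι * s)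
    (hOre : ∀ x y, G.Adj x y → G.degree x + G.degree y < 2 * Fintype.card ι) :
    ∃ f : G.Coloring ι, ∀ c, (f.colorClass c).ncard = s := by
  classical
  have degIn_univ : ∀ x, degIn G univ x = G.degree x := fun x => by
    rw [← G.card_neighborFinset_eq_degree, G.neighborFinset_eq_filter, degIn]
    congr!
  obtain ⟨f, hf⟩ := exists_isEquitableOn_of_oreOn (ι := ι) G hcard fun x _ y _ hxy => by
    simpa only [degIn_univ] using hOre x y hxy
  let F : G.Coloring ι := .mk f fun {x y} => hf.ne_of_adj x (mem_univ x) y (mem_univ y)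
  refine ⟨F, fun c => ?_⟩
  have hclass : F.colorClass c = classIn univ f c := by
    ext v
    rw [mem_coe, mem_classIn, and_iff_right (mem_univ v)]
    rfl
  rw [hclass, Set.ncard_coe_finset, hf.card_class c (mem_univ c)]

lemma deg_eq_degree {V : Type*} (G : SimpleGraph V) (v : V) [Fintype (G.neighborSet v)] :
    deg G v = G.degree v := by
  rw [deg, Nat.card_eq_fintype_card, G.card_neighborSet_eq_degree]

lemma hasPerfectKrPacking_of_coloring_compl {n r : ℕ} {ι : Type*} [Finite ι]
    {G : SimpleGraph (Fin n)} (f : Gᶜ.Coloring ι) (hf : ∀ c, (f.colorClass c).ncard = r) :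
    HasPerfectKrPacking G r := by
  classical
  have := Fintype.ofFinite ι
  refine ⟨univ.image fun c => (f.colorClass c).toFinset, ?_, ?_, ?_⟩
  · simp only [mem_image, mem_univ, true_and, forall_exists_index, forall_apply_eq_imp_iff]
    refine fun c => ⟨by rw [← hf c, Set.ncard_eq_toFinset_card'], ?_⟩
    rw [Set.coe_toFinset, ← SimpleGraph.isIndepSet_compl]
    exact f.isIndepSet_colorClass c
  · rw [coe_image]
    rintro _ ⟨c, -, rfl⟩ _ ⟨d, -, rfl⟩ hcd
    rw [onFun, id, id, Set.disjoint_toFinset, Set.disjoint_left]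
    rintro v rfl rfl
    exact hcd rfl
  · ext v
    simpa using ⟨f v, f.mem_colorClass v⟩

end Packing

/-- (Kierstead–Kostochka) Let `r ≥ 1` divide `n`. If every pair of distinct non-adjacent
vertices `x, y` of a graph `G` on `n` vertices satisfies
`d(x) + d(y) ≥ 2(1 - 1/r)n - 1 = 2(r-1)(n/r) - 1`, then `G` has a perfect `K_r`-packing. -/
theorem stmt17 (n r : ℕ) (hr : 1 ≤ r) (hdvd : r ∣ n) (G : SimpleGraph (Fin n))
    (hOre : ∀ x y : Fin n, x ≠ y → ¬ G.Adj x y →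
      2 * ((r - 1) * (n / r)) - 1 ≤ deg G x + deg G y) :
    HasPerfectKrPacking G r := by
  classical
  have hn : n / r * r = n := Nat.div_mul_cancel hdvd
  have hcompl : ∀ x y, Gᶜ.Adj x y →
      Gᶜ.degree x + Gᶜ.degree y < 2 * Fintype.card (Fin (n / r)) := by
    intro x y hxy
    have hdeg := hOre x y hxy.1 hxy.2
    have hx := G.degree_compl x
    have hy := G.degree_compl y
    have hx' := G.degree_lt_card_verts x
    have hy' := G.degree_lt_card_verts y
    simp only [Fintype.card_fin] at hx hy hx' hy' ⊢
    rw [Nat.sub_one_mul, mul_comm r, hn, deg_eq_degree, deg_eq_degree] at hdeg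
    omega
  obtain ⟨f, hf⟩ := exists_equitable_coloring (s := r) Gᶜ (by simp [hn]) hcompl
  exact hasPerfectKrPacking_of_coloring_compl f hf
end

section
/- Suppose G is a graph on n ≥ 2 vertices with degree sequence d_1 ≤ ⋯ ≤ d_n. If for every i with 1 ≤ i ≤ n/2 we have d_i ≥ i or d_{n−i+1} ≥ n − i, then G contains a Hamilton path. -/
/-!
Adding an edge `uv` to a graph on `n` vertices without a Hamilton path creates one only if
`deg u + deg v ≤ n - 2`. Indeed, deleting `uv` from the new Hamilton path leaves two paths, starting
at `u` and at `v`. On the path from `u`, a neighbour of `v` is never the last vertex and never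
directly followed by a neighbour of `u`, since otherwise the two paths could be reconnected without
`uv`; so the number of neighbours of `u` and of `v` on it, added up, is less than its number of
vertices. The same holds on the path from `v`.

Hence this degree bound holds for all nonadjacent pairs of an edge-maximal supergraph without a
Hamilton path. In such a graph let `v` have maximal degree among the vertices with a non-neighbour,
and `u` maximal degree among the non-neighbours of `v`: the index `i = deg u + 1` then violates the
degree condition.
-/

open Finset List

theorem countP_cons_add_countP_le_length {α : Type*} {p q : α → Bool} {x : α} {l : List α}
    (hpq : (x :: l).IsChain fun a b ↦ ¬(p a ∧ q b))
    (hp : ¬p ((x :: l).getLast (cons_ne_nil x l))) :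
    (x :: l).countP p + l.countP q ≤ l.length := by
  induction l generalizing x with
  | nil => simpa using hp
  | cons y l ih =>
    obtain ⟨hxy, hchain⟩ := isChain_cons_cons.1 hpq
    have ih := ih hchain (by simpa only [getLast_cons_cons] using hp)
    simp only [countP_cons, length_cons] at ih ⊢
    split_ifs at ih ⊢ <;> first | omega | tauto

theorem card_filter_lt_le_of_monotone_comp {V α : Type*} [Fintype V] [LinearOrder α] {n : ℕ}
    {f : V → α} {σ : Fin n ≃ V} (hf : Monotone (f ∘ σ)) {c : α} {j : Fin n} (hj : c ≤ f (σ j)) :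
    #{v | f v < c} ≤ j := by
  have hsub : ({v | f v < c} : Finset V) ⊆ (Finset.Iio j).map σ.toEmbedding := by
    intro v hv
    rw [mem_filter_univ] at hv
    rw [mem_map_equiv, Finset.mem_Iio]
    by_contra! hjv
    have hle : f (σ j) ≤ f v := by simpa using hf hjv
    exact (hj.trans hle).not_gt hv
  simpa using card_le_card hsub

theorem sub_le_card_filter_le_of_monotone_comp {V α : Type*} [Fintype V] [LinearOrder α] {n : ℕ}
    {f : V → α} {σ : Fin n ≃ V} (hf : Monotone (f ∘ σ)) {c : α} {j : Fin n} (hj : c ≤ f (σ j)) :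
    n - j ≤ #{v | c ≤ f v} := by
  have hlt := card_filter_lt_le_of_monotone_comp hf hj
  have hsum := card_filter_add_card_filter_not (s := (univ : Finset V)) (f · < c)
  simp only [not_lt, card_univ, ← Fintype.card_congr σ, Fintype.card_fin] at hsum
  omega

theorem exists_adj_forall_adj_le {V α : Type*} [Finite V] [LinearOrder α] {G : SimpleGraph V}
    (hG : G ≠ ⊥) (f : V → α) :
    ∃ u v, G.Adj v u ∧ f u ≤ f v ∧ ∀ w, G.Adj v w → f w ≤ f u := by
  have hsupp : G.support.Nonempty := by
    rwa [Set.nonempty_iff_ne_empty, ne_eq, G.support_eq_bot_iff]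
  obtain ⟨v, hv, hvmax⟩ := Set.exists_max_image G.support f (Set.toFinite _) hsupp
  obtain ⟨u, hvu, humax⟩ := Set.exists_max_image (G.neighborSet v) f (Set.toFinite _) hv
  exact ⟨u, v, hvu, hvmax u ⟨v, hvu.symm⟩, humax⟩

section Degree

variable {V : Type*}

theorem deg_mono [Finite V] {G H : SimpleGraph V} (hGH : G ≤ H) (v : V) : deg G v ≤ deg H v :=
  Nat.card_mono (Set.toFinite _) fun _ h ↦ hGH h

theorem deg_eq_card_filter [Fintype V] (G : SimpleGraph V) [DecidableRel G.Adj] (v : V) :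
    deg G v = #{w | G.Adj v w} := by
  rw [deg, Nat.card_eq_fintype_card, G.card_neighborSet_eq_degree,
    ← G.card_neighborFinset_eq_degree, G.neighborFinset_eq_filter]

theorem deg_compl_add_deg_add_one [Fintype V] (G : SimpleGraph V) (v : V) :
    deg Gᶜ v + deg G v + 1 = Fintype.card V := by
  classical
  have hcompl := G.degree_compl v
  have hlt := G.degree_lt_card_verts v
  simp only [deg, Nat.card_eq_fintype_card, SimpleGraph.card_neighborSet_eq_degree]
  omega

theorem countP_adj_eq_deg [Fintype V] (G : SimpleGraph V) [DecidableRel G.Adj] (v : V)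
    {l : List V} (hl : l ~ univ.toList) : l.countP (G.Adj v ·) = deg G v := by
  rw [deg_eq_card_filter, hl.countP_eq, ← Multiset.coe_countP, coe_toList,
    Multiset.countP_eq_card_filter, Finset.card_def, filter_val]

end Degree

section Reconnection

variable {V : Type*} {G : SimpleGraph V} {u v : V} {s t : List V}

theorem isChain_adj_reverse {l : List V} : l.reverse.IsChain G.Adj ↔ l.IsChain G.Adj := by
  rw [isChain_reverse]
  exact ⟨.imp fun _ _ ↦ .symm, .imp fun _ _ ↦ .symm⟩

theorem isChain_adj_reverse_append {p q : List V} (hp : p.IsChain G.Adj) (hq : q.IsChain G.Adj)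
    (hpq : ∀ a ∈ p.head?, ∀ b ∈ q.head?, G.Adj a b) : (p.reverse ++ q).IsChain G.Adj :=
  (isChain_adj_reverse.2 hp).append hq (by simpa only [getLast?_reverse])

theorem exists_perm_isChain_of_adj_getLast (hs : (u :: s).IsChain G.Adj)
    (ht : (v :: t).IsChain G.Adj) (hv : G.Adj v ((u :: s).getLast (cons_ne_nil u s))) :
    ∃ l, l ~ u :: s ++ v :: t ∧ l.IsChain G.Adj := by
  refine ⟨(v :: t).reverse ++ (u :: s).reverse, ?_, ?_⟩
  · exact perm_append_comm.trans ((reverse_perm _).append (reverse_perm _))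
  · refine isChain_adj_reverse_append ht (isChain_adj_reverse.2 hs) ?_
    simpa only [head?_reverse, getLast?_eq_some_getLast (cons_ne_nil u s), head?_cons,
      Option.mem_some, forall_eq'] using hv

theorem exists_perm_isChain_of_adj_of_adj (hs : (u :: s).IsChain G.Adj)
    (ht : (v :: t).IsChain G.Adj) {x y : List V} {a b : V} (hxy : u :: s = x ++ a :: b :: y)
    (hva : G.Adj v a) (hub : G.Adj u b) :
    ∃ l, l ~ u :: s ++ v :: t ∧ l.IsChain G.Adj := by
  have hhead : (x ++ [a]).head? = some u := by
    cases x <;> simp_all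
  rw [hxy] at hs ⊢
  obtain ⟨hx, -, hy⟩ := isChain_append_cons_cons.1 hs
  have hrot : ((x ++ [a]).reverse ++ b :: y).IsChain G.Adj :=
    isChain_adj_reverse_append hx hy (by simpa [hhead] using hub)
  refine ⟨(v :: t).reverse ++ ((x ++ [a]).reverse ++ b :: y), ?_, ?_⟩
  · rw [append_cons x a (b :: y)]
    exact perm_append_comm.trans (((reverse_perm _).append_right _).append (reverse_perm _))
  · exact isChain_adj_reverse_append ht hrot (by simpa using hva)

theorem countP_adj_add_countP_adj_lt_length [DecidableRel G.Adj] (hs : (u :: s).IsChain G.Adj)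
    (ht : (v :: t).IsChain G.Adj) (hno : ¬∃ l, l ~ u :: s ++ v :: t ∧ l.IsChain G.Adj) :
    (u :: s).countP (G.Adj v ·) + (u :: s).countP (G.Adj u ·) < (u :: s).length := by
  have hcross : (u :: s).IsChain fun a b ↦ ¬(decide (G.Adj v a) ∧ decide (G.Adj u b)) := by
    refine isChain_iff_forall_rel_of_append_cons_cons.2 fun a b x y hxy hab ↦ hno ?_
    rw [decide_eq_true_iff, decide_eq_true_iff] at hab
    exact exists_perm_isChain_of_adj_of_adj hs ht hxy hab.1 hab.2
  have hlast : ¬decide (G.Adj v ((u :: s).getLast (cons_ne_nil u s))) := by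
    rw [decide_eq_true_iff]
    exact fun hv ↦ hno (exists_perm_isChain_of_adj_getLast hs ht hv)
  rw [countP_cons_of_neg (p := (G.Adj u ·)) (by simp), length_cons, Nat.lt_succ_iff]
  exact countP_cons_add_countP_le_length hcross hlast

end Reconnection

section SupEdge

variable {V : Type*} {G : SimpleGraph V} {u v : V} {l : List V}

theorem isChain_adj_of_sup_edge_of_notMem (hl : l.IsChain (G ⊔ SimpleGraph.edge u v).Adj)
    (hv : v ∉ l) : l.IsChain G.Adj := by
  refine hl.imp_of_mem_imp fun x y hx hy hxy ↦ ?_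
  rw [SimpleGraph.sup_adj, SimpleGraph.edge_adj] at hxy
  rcases hxy with hxy | ⟨⟨-, rfl⟩ | ⟨rfl, -⟩, -⟩
  · exact hxy
  · exact absurd hy hv
  · exact absurd hx hv

theorem isChain_adj_of_isChain_sup_edge_append {p q : List V}
    (hnodup : (p ++ [u] ++ v :: q).Nodup)
    (hp : (p ++ [u]).IsChain (G ⊔ SimpleGraph.edge u v).Adj)
    (hq : (v :: q).IsChain (G ⊔ SimpleGraph.edge u v).Adj) :
    (u :: p.reverse).IsChain G.Adj ∧ (v :: q).IsChain G.Adj := by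
  have hdisj := disjoint_of_nodup_append hnodup
  constructor
  · rw [← reverse_concat, isChain_adj_reverse]
    exact isChain_adj_of_sup_edge_of_notMem hp fun hv ↦ hdisj hv mem_cons_self
  · rw [SimpleGraph.edge_comm] at hq
    exact isChain_adj_of_sup_edge_of_notMem hq fun hu ↦ hdisj (by simp) hu

theorem exists_isChain_adj_of_isChain_sup_edge (hnodup : l.Nodup)
    (hl : l.IsChain (G ⊔ SimpleGraph.edge u v).Adj) (hG : ¬l.IsChain G.Adj) :
    ∃ s t, (u :: s).IsChain G.Adj ∧ (v :: t).IsChain G.Adj ∧ u :: s ++ v :: t ~ l := by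
  rw [isChain_iff_forall_rel_of_append_cons_cons] at hG
  push Not at hG
  obtain ⟨a, b, p, q, rfl, hab⟩ := hG
  obtain ⟨hp, hedge, hq⟩ := isChain_append_cons_cons.1 hl
  have hperm : a :: p.reverse ++ b :: q ~ p ++ a :: b :: q := by
    rw [append_cons p, ← reverse_concat]
    exact (reverse_perm _).append_right _
  rw [append_cons p] at hnodup
  rw [SimpleGraph.sup_adj, SimpleGraph.edge_adj] at hedge
  rcases hedge.resolve_left hab with ⟨⟨rfl, rfl⟩ | ⟨rfl, rfl⟩, -⟩
  · obtain ⟨hs, ht⟩ := isChain_adj_of_isChain_sup_edge_append hnodup hp hq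
    exact ⟨_, _, hs, ht, hperm⟩
  · rw [SimpleGraph.edge_comm] at hp hq
    obtain ⟨ht, hs⟩ := isChain_adj_of_isChain_sup_edge_append hnodup hp hq
    exact ⟨_, _, hs, ht, perm_append_comm.trans hperm⟩

end SupEdge

section Traceable

variable {V : Type*} [Fintype V] {G : SimpleGraph V} {u v : V}

/-- A graph is traceable if it has a Hamilton path. The path is encoded as a list enumerating
the vertices in which consecutive entries are adjacent, so the graph without vertices is traceable,
although it has no walk. -/
def IsTraceable (G : SimpleGraph V) : Prop := ∃ l, l ~ univ.toList ∧ l.IsChain G.Adj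

theorem IsTraceable.exists_isHamiltonian [DecidableEq V] [Nonempty V] (hG : IsTraceable G) :
    ∃ (a b : V) (p : G.Walk a b), p.IsHamiltonian := by
  obtain ⟨l, hperm, hchain⟩ := hG
  have hmem (v : V) : v ∈ l := hperm.mem_iff.2 (by simp)
  have hne : l ≠ [] := ne_nil_of_mem (hmem (Classical.arbitrary V))
  refine ⟨_, _, .ofSupport l hne hchain, fun v ↦ ?_⟩
  rw [SimpleGraph.Walk.support_ofSupport]
  exact count_eq_one_of_mem (hperm.nodup_iff.2 (nodup_toList _)) (hmem v)

theorem isTraceable_top : IsTraceable (⊤ : SimpleGraph V) :=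
  ⟨_, .rfl, (nodup_toList univ).isChain⟩

theorem deg_add_deg_add_two_le_of_isTraceable_sup_edge (hG : ¬IsTraceable G)
    (hsup : IsTraceable (G ⊔ SimpleGraph.edge u v)) :
    deg G u + deg G v + 2 ≤ Fintype.card V := by
  classical
  obtain ⟨l, hperm, hchain⟩ := hsup
  obtain ⟨s, t, hs, ht, hst⟩ := exists_isChain_adj_of_isChain_sup_edge
    (hperm.nodup_iff.2 (nodup_toList _)) hchain fun h ↦ hG ⟨l, hperm, h⟩
  replace hst := hst.trans hperm
  have hu := countP_adj_add_countP_adj_lt_length hs ht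
    fun ⟨l, hl, hlG⟩ ↦ hG ⟨l, hl.trans hst, hlG⟩
  have hv := countP_adj_add_countP_adj_lt_length ht hs
    fun ⟨l, hl, hlG⟩ ↦ hG ⟨l, hl.trans (perm_append_comm.trans hst), hlG⟩
  rw [← countP_adj_eq_deg G u hst, ← countP_adj_eq_deg G v hst, ← card_univ, ← length_toList,
    ← hst.length_eq, countP_append, countP_append, length_append]
  omega

end Traceable

section Chvatal

variable {V : Type*} [Fintype V] {G H : SimpleGraph V}

/-- Chvátal's condition for Hamilton paths, stated without ordering the vertices: at most `i - 1`
degrees are below `i` (that is, `d_i ≥ i`), or at least `i` degrees are at least `n - i` (that is,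
`d_{n-i+1} ≥ n - i`). -/
def ChvatalCondition (G : SimpleGraph V) : Prop :=
  ∀ i, 1 ≤ i → 2 * i ≤ Fintype.card V →
    #{v | deg G v < i} < i ∨ i ≤ #{v | Fintype.card V - i ≤ deg G v}

theorem ChvatalCondition.mono (hGH : G ≤ H) (hG : ChvatalCondition G) : ChvatalCondition H := by
  intro i hi hin
  refine (hG i hi hin).imp (lt_of_le_of_lt ?_) (le_trans · ?_)
  · exact card_le_card <| monotone_filter_right _ fun v _ ↦ (deg_mono hGH v).trans_lt
  · exact card_le_card <| monotone_filter_right _ fun v _ hv ↦ hv.trans (deg_mono hGH v)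

theorem chvatalCondition_of_monotone_comp {n : ℕ} {σ : Fin n ≃ V} (hmono : Monotone (deg G ∘ σ))
    (hcond : ∀ j : Fin n, 2 * (j + 1 : ℕ) ≤ n →
      j + 1 ≤ deg G (σ j) ∨ n - (j + 1) ≤ deg G (σ j.rev)) :
    ChvatalCondition G := by
  have hcard : Fintype.card V = n := by simpa using (Fintype.card_congr σ).symm
  intro i hi hin
  rw [hcard] at hin ⊢
  obtain ⟨j, rfl⟩ := Nat.exists_eq_add_of_le' hi
  rcases hcond ⟨j, by omega⟩ hin with hlow | hhigh
  · exact .inl (Nat.lt_succ_of_le (card_filter_lt_le_of_monotone_comp hmono hlow))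
  · have hcount := sub_le_card_filter_le_of_monotone_comp hmono hhigh
    rw [Fin.val_rev, Nat.sub_sub_self (by omega)] at hcount
    exact .inr hcount

theorem card_filter_card_sub_le_deg_le
    (hclosed : ∀ u v, Gᶜ.Adj u v → deg G u + deg G v + 2 ≤ Fintype.card V) {u : V}
    (hu : 2 * (deg G u + 1) ≤ Fintype.card V) :
    #{w | Fintype.card V - (deg G u + 1) ≤ deg G w} ≤ deg G u := by
  classical
  refine (card_le_card <| monotone_filter_right _ fun w _ hw ↦ ?_).trans
    (deg_eq_card_filter G u).ge
  by_contra huw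
  rcases eq_or_ne u w with rfl | hne
  · omega
  · have := hclosed u w ((G.compl_adj u w).2 ⟨hne, huw⟩)
    omega

theorem ChvatalCondition.eq_top (hG : ChvatalCondition G)
    (hclosed : ∀ u v, Gᶜ.Adj u v → deg G u + deg G v + 2 ≤ Fintype.card V) : G = ⊤ := by
  classical
  by_contra htop
  obtain ⟨u, v, hvu, hle, hmax⟩ :=
    exists_adj_forall_adj_le (G := Gᶜ) (compl_eq_bot.not.2 htop) (deg G)
  have hsum := hclosed v u hvu
  rcases hG (deg G u + 1) (by omega) (by omega) with hlow | hhigh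
  · have hsub : deg Gᶜ v ≤ #{w | deg G w < deg G u + 1} := by
      rw [deg_eq_card_filter]
      exact card_le_card <| monotone_filter_right _ fun w _ hw ↦ Nat.lt_succ_of_le (hmax w hw)
    have hcompl := deg_compl_add_deg_add_one G v
    omega
  · have := card_filter_card_sub_le_deg_le hclosed (u := u) (by omega)
    omega

theorem ChvatalCondition.isTraceable (hG : ChvatalCondition G) : IsTraceable G := by
  by_contra hnot
  obtain ⟨H, hGH, hmax⟩ := Finite.exists_le_maximal (p := fun H ↦ ¬IsTraceable H) hnot
  have hclosed (u v : V) (huv : Hᶜ.Adj u v) : deg H u + deg H v + 2 ≤ Fintype.card V := by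
    obtain ⟨hne, hadj⟩ := (H.compl_adj u v).1 huv
    have hsup : IsTraceable (H ⊔ SimpleGraph.edge u v) :=
      not_not.1 (hmax.not_prop_of_gt (H.lt_sup_edge u v hne hadj))
    exact deg_add_deg_add_two_le_of_isTraceable_sup_edge hmax.prop hsup
  have htop : H = ⊤ := (hG.mono hGH).eq_top hclosed
  exact hmax.prop (htop ▸ isTraceable_top)

end Chvatal

/-- (Chvátal) Let `G` be a graph on `n ≥ 2` vertices with nondecreasing degree sequence `d`
(realised via a permutation `σ` of the vertices, 1-based: `d_i = d ⟨i-1⟩`). If for every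
`1 ≤ i ≤ n/2` we have `d_i ≥ i` or `d_{n-i+1} ≥ n - i`, then `G` has a Hamilton path. -/
theorem stmt19 (n : ℕ) (hn : 2 ≤ n) (G : SimpleGraph (Fin n))
    (d : Fin n → ℕ) (σ : Equiv.Perm (Fin n))
    (hmono : Monotone d) (hdeg : ∀ i, d i = deg G (σ i))
    (hcond : ∀ i : ℕ, ∀ h1 : 1 ≤ i, ∀ h2 : 2 * i ≤ n,
      i ≤ d ⟨i - 1, by omega⟩ ∨ n - i ≤ d ⟨n - i, by omega⟩) :
    ∃ (a b : Fin n) (p : G.Walk a b), p.IsHamiltonian := by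
  obtain rfl : d = deg G ∘ σ := funext hdeg
  have : Nonempty (Fin n) := ⟨⟨0, by omega⟩⟩
  have hG : ChvatalCondition G :=
    chvatalCondition_of_monotone_comp hmono fun j hj ↦ hcond (j + 1) (by omega) hj
  exact hG.isTraceable.exists_isHamiltonian
end
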